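/- arXiv:math/0204143 — 2 statements merged into one kernel-verified Lean document; each statement's English description precedes it below -/
import Mathlib

section
/- For every cardinal number α ≥ 𝔠, there exists a metrizable topological space X with |X| = α such that every quasiordered set (Q, ≤) with |Q| ≤ α has a representation by clopen subspaces of X with respect to embeddability onto closed subspaces; that is, there is a family {X(q) : q ∈ Q} of pairwise non-homeomorphic clopen subsets of X such that q ≤ q' if and only if X(q) is homeomorphic to a closed subset of X(q'), and moreover ¬(q ≤ q') implies that there exists no injective continuous map from X(q) into X(q'). -/
universe u

open Cardinal

/-- `A` is homeomorphic to a closed subset of `B`. -/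
def HomeoToClosedSubset (A : Type*) [TopologicalSpace A]
    (B : Type*) [TopologicalSpace B] : Prop :=
  ∃ t : Set B, IsClosed t ∧ Nonempty (A ≃ₜ t)

/-- There exists an injective continuous map from `A` into `B`. -/
def ExistsInjCont (A : Type*) [TopologicalSpace A]
    (B : Type*) [TopologicalSpace B] : Prop :=
  ∃ f : A → B, Continuous f ∧ Function.Injective f

/-- The representation property of the space `X` for a quasiorder, with respect to
embeddability onto closed subspaces. -/
def RepresentsByClosedEmb (α : Cardinal.{u}) (X : Type u) [TopologicalSpace X] : Prop :=
  ∀ (Q : Type u) (le : Q → Q → Prop), #Q ≤ α →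
    (∀ q, le q q) → (∀ a b c, le a b → le b c → le a c) →
    ∃ Xq : Q → Set X,
      (∀ q, IsClopen (Xq q)) ∧
      (∀ q q', q ≠ q' → IsEmpty ((Xq q) ≃ₜ (Xq q'))) ∧
      (∀ q q', le q q' ↔ HomeoToClosedSubset (Xq q) (Xq q')) ∧
      (∀ q q', ¬ le q q' → ¬ ExistsInjCont (Xq q) (Xq q'))

namespace QRep
open Set Filter Topology

abbrev Pl := ℝ × ℝ

/-- A relation on the plane from which one can choose pairs outside any two small sets. -/
def Large (R : Pl → Pl → Prop) : Prop :=
  ∀ A B : Set Pl, #A < 𝔠 → #B < 𝔠 → ∃ a b, R a b ∧ a ∉ B ∧ b ∉ A ∧ a ≠ b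

theorem recursion {I : Type} [LinearOrder I] [WellFoundedLT I] (hI : ∀ i : I, #(Iio i) < 𝔠)
    (P : Set Pl) (hP : P.Countable) (R : I → Pl → Pl → Prop) (hR : ∀ i, Large (R i)) :
    ∃ a b : I → Pl, (∀ i, R i (a i) (b i)) ∧ (∀ i j, a i ≠ b j) ∧ ∀ i, a i ∉ P := by
  have key : ∀ (i : I) (f : ∀ j, j < i → Pl × Pl), ∃ p : Pl × Pl,
      R i p.1 p.2 ∧ p.1 ∉ P ∧ p.1 ≠ p.2 ∧ ∀ j (hj : j < i), p.1 ≠ (f j hj).2 ∧ p.2 ≠ (f j hj).1 := by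
    intro i f
    have h1 : #(range fun j : Iio i => (f j.1 j.2).1) < 𝔠 := mk_range_le.trans_lt (hI i)
    have h2 : #(range fun j : Iio i => (f j.1 j.2).2) < 𝔠 := mk_range_le.trans_lt (hI i)
    have h3 : #P < 𝔠 := (le_aleph0_iff_set_countable.2 hP).trans_lt aleph0_lt_continuum
    have h4 : #(P ∪ range fun j : Iio i => (f j.1 j.2).2 : Set Pl) < 𝔠 :=
      (mk_union_le _ _).trans_lt (add_lt_of_lt aleph0_le_continuum h3 h2)
    obtain ⟨a, b, hab, ha, hb, hne⟩ := hR i _ _ h1 h4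
    refine ⟨(a, b), hab, fun h => ha (Or.inl h), hne, fun j hj => ⟨?_, ?_⟩⟩
    · rintro h
      exact ha (Or.inr ⟨⟨j, hj⟩, h.symm⟩)
    · rintro h
      exact hb ⟨⟨j, hj⟩, h.symm⟩
  choose F hF using key
  let p : I → Pl × Pl := (wellFounded_lt (α := I)).fix F
  have hp : ∀ i, p i = F i (fun j _ => p j) := fun i => WellFounded.fix_eq _ _ _
  have hp' := fun i => hF i (fun j _ => p j)
  simp only [← hp] at hp'
  refine ⟨fun i => (p i).1, fun i => (p i).2, fun i => (hp' i).1, fun i j => ?_,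
    fun i => (hp' i).2.1⟩
  rcases lt_trichotomy i j with h | h | h
  · exact (((hp' j).2.2.2 i h).2).symm
  · subst h
    exact (hp' i).2.2.1
  · exact ((hp' i).2.2.2 j h).1

abbrev Task := (ℕ → Pl × Pl) × (Pl × ℝ)

theorem mk_Pl : #Pl = 𝔠 := by simp [mk_real]

theorem mk_Task : #Task = 𝔠 := by simp [mk_real]

/-- the relation attached to a task for maps -/
def RelMap (t : Task) (x y : Pl) : Prop :=
  x ∈ Metric.ball t.2.1 t.2.2 ∧ (comap (fun n => (t.1 n).1) (𝓝 x)).NeBot ∧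
    Tendsto (fun n => (t.1 n).2) (comap (fun n => (t.1 n).1) (𝓝 x)) (𝓝 y)

/-- the relation attached to a task for closed sets -/
def RelCl (t : Task) (x _y : Pl) : Prop := x ∈ closure (range fun n => (t.1 n).1)

theorem exists_avoid (P : Set Pl) (hP : P.Countable) :
    ∃ A B : Set Pl, Disjoint A B ∧ Disjoint A P ∧
      (∀ t, Large (RelMap t) → ∃ a ∈ A, ∃ b ∈ B, RelMap t a b) ∧
      (∀ t, Large (RelCl t) → ∃ a ∈ A, ∃ b ∈ B, RelCl t a b) := by
  classical
  have hc : #(Task ⊕ Task) = #((𝔠 : Cardinal.{0}).ord.ToType) := by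
    rw [mk_ord_toType, mk_sum, mk_Task]; simp
  obtain ⟨e⟩ := Cardinal.eq.1 hc
  let R0 : Task ⊕ Task → Pl → Pl → Prop := Sum.elim RelMap RelCl
  have huniv : Large (fun _ _ => True) := by
    intro A B hA hB
    have hB' : ∃ a, a ∉ B := by
      by_contra h
      push Not at h
      rw [eq_univ_of_forall h, mk_univ, mk_Pl] at hB
      exact lt_irrefl _ hB
    obtain ⟨a, ha⟩ := hB'
    have hA' : ∃ b, b ∉ A ∪ {a} := by
      by_contra h
      push Not at h
      have : #(A ∪ {a} : Set Pl) < 𝔠 := (mk_union_le _ _).trans_lt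
        (add_lt_of_lt aleph0_le_continuum hA (by simpa using nat_lt_continuum 1))
      rw [eq_univ_of_forall h, mk_univ, mk_Pl] at this
      exact lt_irrefl _ this
    obtain ⟨b, hb⟩ := hA'
    refine ⟨a, b, trivial, ha, fun h => hb (Or.inl h), fun h => hb (Or.inr h.symm)⟩
  obtain ⟨a, b, h1, h2, h3⟩ := recursion (I := (𝔠 : Cardinal.{0}).ord.ToType)
    (fun i => by
      have := Cardinal.mk_Iio_lt i (by simp)
      rwa [mk_ord_toType] at this) P hP
    (fun i => if Large (R0 (e.symm i)) then R0 (e.symm i) else fun _ _ => True)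
    (fun i => by
      split_ifs with h
      · exact h
      · exact huniv)
  have h4 : ∀ s, Large (R0 s) → ∃ x ∈ range a, ∃ y ∈ range b, R0 s x y := by
    intro s hs
    refine ⟨a (e s), ⟨_, rfl⟩, b (e s), ⟨_, rfl⟩, ?_⟩
    have := h1 (e s)
    simpa [hs] using this
  refine ⟨range a, range b, ?_, ?_, fun t ht => h4 (Sum.inl t) ht, fun t ht => h4 (Sum.inr t) ht⟩
  · rw [Set.disjoint_left]
    rintro _ ⟨i, rfl⟩ ⟨j, h⟩
    exact h2 i j h.symm
  · rw [Set.disjoint_left]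
    rintro _ ⟨i, rfl⟩
    exact h3 i

theorem mk_closed {F : Set Pl} (hF : IsClosed F) (hunc : ¬ F.Countable) : 𝔠 ≤ #F := by
  obtain ⟨f, hf, -, hinj⟩ := hF.exists_nat_bool_injection_of_not_countable hunc
  have : #(ℕ → Bool) ≤ #F :=
    mk_le_of_injective (f := fun x => (⟨f x, hf ⟨x, rfl⟩⟩ : F))
      (fun x y h => hinj (congrArg Subtype.val h))
  simpa using this

theorem not_countable_of_mk {s : Set Pl} (h : 𝔠 ≤ #s) : ¬ s.Countable := fun hc =>
  absurd (le_aleph0_iff_set_countable.2 hc) (not_le.2 (aleph0_lt_continuum.trans_le h))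

theorem exists_rigid (P : Set Pl) (hP : P.Countable) :
    ∃ A : Set Pl, Disjoint A P ∧ IsPreconnected A ∧ Dense A ∧
      ∀ (O : Set Pl) (g : Pl → Pl), IsOpen O → ContinuousOn g (O ∩ A) → InjOn g (O ∩ A) →
        MapsTo g (O ∩ A) A → ∀ x ∈ O ∩ A, g x = x := by
  obtain ⟨A, B, hAB, hAP, hmap, hcl⟩ := exists_avoid P hP
  have hmeet : ∀ F : Set Pl, IsClosed F → ¬ F.Countable → (F ∩ A).Nonempty := by
    intro F hF hunc
    have hcard := mk_closed hF hunc
    have hne : Nonempty F := by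
      by_contra h
      rw [not_nonempty_iff, isEmpty_coe_sort] at h
      exact hunc (h ▸ countable_empty)
    obtain ⟨u, hu⟩ := TopologicalSpace.exists_dense_seq F
    have hcl' : F ⊆ closure (range fun n => (u n : Pl)) := by
      intro x hx
      have := hu ⟨x, hx⟩
      rw [closure_subtype] at this
      rwa [← range_comp] at this
    have hcl'' : closure (range fun n => (u n : Pl)) ⊆ F := by
      apply closure_minimal _ hF
      rintro _ ⟨n, rfl⟩
      exact (u n).2
    obtain ⟨a, ha, b, -, hab⟩ := hcl (fun n => (u n, 0), (0, 0)) (by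
      intro A' B' hA' hB'
      obtain ⟨a, ha, haB⟩ : ∃ a ∈ F, a ∉ B' := by
        by_contra h
        push Not at h
        exact absurd (mk_le_mk_of_subset h) (not_le.2 (hB'.trans_le hcard))
      have hA'' : ∃ b, b ∉ A' ∪ {a} := by
        by_contra h
        push Not at h
        have : #(A' ∪ {a} : Set Pl) < 𝔠 := (mk_union_le _ _).trans_lt
          (add_lt_of_lt aleph0_le_continuum hA' (by simpa using nat_lt_continuum 1))
        rw [eq_univ_of_forall h, mk_univ, mk_Pl] at this
        exact lt_irrefl _ this
      obtain ⟨b, hb⟩ := hA''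
      exact ⟨a, b, hcl' ha, haB, fun h => hb (Or.inl h), fun h => hb (Or.inr h.symm)⟩)
    exact ⟨a, hcl'' hab, ha⟩
  have hball : ∀ (c : Pl) (ε : ℝ), 0 < ε → 𝔠 ≤ #(Metric.ball c ε ∩ A : Set Pl) := by
    intro c ε hε
    have h1 : ∀ t : Ioo (c.1 - ε) (c.1 + ε), ∃ y : Pl, y ∈ Metric.ball c ε ∩ A ∧ y.1 = t := by
      rintro ⟨t, ht⟩
      obtain ⟨y, ⟨hy1, hy2⟩, hyA⟩ := hmeet ({t} ×ˢ Icc (c.2 - ε / 2) (c.2 + ε / 2))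
        (isClosed_singleton.prod isClosed_Icc) (by
          apply not_countable_of_mk
          rw [mk_congr (Equiv.Set.prod _ _), mk_prod]
          simp only [Cardinal.lift_id, mk_singleton, one_mul]
          rw [mk_Icc_real (by linarith)])
      refine ⟨y, ⟨?_, hyA⟩, hy1⟩
      rw [Metric.mem_ball, Prod.dist_eq, max_lt_iff]
      simp only [mem_singleton_iff] at hy1
      constructor
      · rw [Real.dist_eq, hy1, abs_lt]
        constructor <;> linarith [ht.1, ht.2]
      · rw [Real.dist_eq, abs_lt]
        constructor <;> linarith [hy2.1, hy2.2]
    choose y hy hyt using h1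
    rw [← mk_Ioo_real (show c.1 - ε < c.1 + ε by linarith)]
    refine mk_le_of_injective (f := fun t => (⟨y t, hy t⟩ : (Metric.ball c ε ∩ A : Set Pl))) ?_
    intro s t hst
    have : y s = y t := congrArg Subtype.val hst
    apply Subtype.ext
    rw [← hyt s, ← hyt t, this]
  have hdense : Dense A := by
    rw [Metric.dense_iff]
    intro x r hr
    have := hball x r hr
    rw [nonempty_iff_ne_empty]
    intro h
    rw [h] at this
    simp [continuum_ne_zero] at this
  refine ⟨A, hAP, ?_, hdense, ?_⟩
  · intro u v hu hv huv hAu hAv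
    by_contra hne
    have huv0 : u ∩ v = ∅ := by
      by_contra h
      rw [← ne_eq, ← nonempty_iff_ne_empty] at h
      obtain ⟨z, hz, hzA⟩ := hdense.inter_open_nonempty _ (hu.inter hv) h
      exact hne ⟨z, hzA, hz⟩
    have hF : ((u ∪ v)ᶜ).Countable := by
      by_contra h
      obtain ⟨z, hz, hzA⟩ := hmeet _ (hu.union hv).isClosed_compl h
      exact hz (huv hzA)
    have hconn := hF.isConnected_compl_of_one_lt_rank (by simp [one_add_one_eq_two])
    rw [compl_compl] at hconn
    obtain ⟨z, -, hz⟩ := hconn.isPreconnected u v hu hv subset_rfl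
      (hAu.mono fun z hz => ⟨Or.inl hz.2, hz.2⟩) (hAv.mono fun z hz => ⟨Or.inr hz.2, hz.2⟩)
    rw [huv0] at hz
    exact hz
  · intro O g hO hg hinj hmaps x0 hx0
    by_contra hne
    -- find a ball on which nothing is fixed
    obtain ⟨ε, hε, hεO, hεne⟩ : ∃ ε > 0, Metric.ball x0 ε ∩ A ⊆ O ∩ A ∧
        ∀ x ∈ Metric.ball x0 ε ∩ A, g x ≠ x := by
      have h1 : ∀ᶠ x in 𝓝[O ∩ A] x0, g x ≠ x := by
        have h0 : ContinuousWithinAt (fun x => g x - x) (O ∩ A) x0 :=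
          (hg x0 hx0).sub continuousWithinAt_id
        have h0' := Tendsto.eventually_ne h0 (sub_ne_zero.2 hne)
        filter_upwards [h0'] with x hx
        exact sub_ne_zero.1 hx
      have h2 : 𝓝[O ∩ A] x0 = 𝓝[A] x0 := by
        rw [inter_comm]
        exact nhdsWithin_inter_of_mem' (mem_nhdsWithin_of_mem_nhds (hO.mem_nhds hx0.1))
      rw [h2] at h1
      have h3 : ∀ᶠ x in 𝓝[A] x0, x ∈ O := mem_nhdsWithin_of_mem_nhds (hO.mem_nhds hx0.1)
      obtain ⟨ε, hε, h⟩ := Metric.mem_nhdsWithin_iff.1 (h1.and h3)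
      exact ⟨ε, hε, fun x hx => ⟨(h hx).2, hx.2⟩, fun x hx => (h hx).1⟩
    set U := Metric.ball x0 ε ∩ A with hU
    have hgU := hg.mono hεO
    have hinjU := hinj.mono hεO
    have hne : Nonempty U := ⟨⟨x0, Metric.mem_ball_self hε, hx0.2⟩⟩
    obtain ⟨d, hd⟩ := TopologicalSpace.exists_dense_seq U
    have hlim : ∀ x ∈ U, (comap (fun n => (d n : Pl)) (𝓝 x)).NeBot ∧
        Tendsto (fun n => g (d n)) (comap (fun n => (d n : Pl)) (𝓝 x)) (𝓝 (g x)) := by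
      intro x hx
      constructor
      · have := hd ⟨x, hx⟩
        rw [closure_subtype, ← range_comp] at this
        rw [comap_neBot_iff]
        intro t ht
        obtain ⟨_, h1, ⟨n, rfl⟩⟩ := mem_closure_iff_nhds.1 this t ht
        exact ⟨n, h1⟩
      · have h1 : Tendsto (fun n => (d n : Pl)) (comap (fun n => (d n : Pl)) (𝓝 x)) (𝓝[U] x) :=
          tendsto_nhdsWithin_iff.2 ⟨tendsto_comap, Eventually.of_forall fun n => (d n).2⟩
        exact (hgU x hx).tendsto.comp h1
    obtain ⟨a, haA, b, hbB, hab⟩ := hmap (fun n => (d n, g (d n)), (x0, ε)) (by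
      intro A' B' hA' hB'
      obtain ⟨a, ha, haB, haA⟩ : ∃ a ∈ U, a ∉ B' ∧ g a ∉ A' := by
        by_contra h
        push Not at h
        have h1 : U ⊆ B' ∪ (U ∩ g ⁻¹' A') := by
          intro a ha
          by_cases hB : a ∈ B'
          · exact Or.inl hB
          · exact Or.inr ⟨ha, h a ha hB⟩
        have h2 : #(U ∩ g ⁻¹' A' : Set Pl) ≤ #A' :=
          mk_le_of_injective (f := fun z => (⟨g z.1, z.2.2⟩ : A'))
            (fun z z' hz => Subtype.ext (hinjU z.2.1 z'.2.1 (congrArg Subtype.val hz)))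
        have h3 : #U < 𝔠 := (mk_le_mk_of_subset h1).trans_lt ((mk_union_le _ _).trans_lt
          (add_lt_of_lt aleph0_le_continuum hB' (h2.trans_lt hA')))
        exact absurd (hball x0 ε hε) (not_le.2 h3)
      exact ⟨a, g a, ⟨ha.1, (hlim a ha).1, (hlim a ha).2⟩, haB, haA, (hεne a ha).symm⟩)
    have haU : a ∈ U := ⟨hab.1, haA⟩
    have := hab.2.1
    have hb : b = g a := tendsto_nhds_unique hab.2.2 (hlim a haU).2
    exact Set.disjoint_left.1 hAB (hmaps (hεO haU)) (hb ▸ hbB)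

end QRep
namespace QRep
open Set Filter Topology

/-- hedgehog distance for one coordinate -/
noncomputable def hd {V : Type*} (x y : V) (s t : ℝ) : ℝ :=
  open Classical in if x = y then |s - t| else s + t

theorem hd_triangle {V : Type*} (x y z : V) (s t r : ℝ) (hs : 0 ≤ s) (ht : 0 ≤ t) (hr : 0 ≤ r) :
    hd x z s r ≤ hd x y s t + hd y z t r := by
  unfold hd
  have h1 := le_abs_self (s - t)
  have h2 := neg_abs_le (s - t)
  have h3 := le_abs_self (t - r)
  have h4 := neg_abs_le (t - r)
  have h5 := abs_sub_le s t r
  have h6 : |s - r| ≤ s + r := abs_le.2 ⟨by linarith, by linarith⟩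
  split_ifs <;> subst_vars <;> first | linarith | simp_all

/-- Data for glueing copies of `B` indexed by `E`. -/
structure Glue (E : Type*) (V : Type*) (B : Type*) [MetricSpace B] where
  v : ℕ → E → V
  w : ℕ → B → ℝ
  w_nonneg : ∀ n b, 0 ≤ w n b
  w_lip : ∀ n b b', |w n b - w n b'| ≤ dist b b'
  act : B → ℕ
  act_pos : ∀ b, 0 < w (act b) b
  act_eq : ∀ b e e', v (act b) e = v (act b) e' → ∀ n, v n e = v n e' ∨ w n b = 0

variable {E : Type*} {V : Type*} {B : Type*} [MetricSpace B]

/-- The pseudo-metric space before identification. -/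
structure Pre (G : Glue E V B) where
  e : E
  b : B

noncomputable instance (G : Glue E V B) : PseudoEMetricSpace (Pre G) where
  edist x y := max (edist x.b y.b)
    (⨆ n, ENNReal.ofReal (hd (G.v n x.e) (G.v n y.e) (G.w n x.b) (G.w n y.b)))
  edist_self x := by simp [hd]
  edist_comm x y := by
    simp only [edist_comm x.b y.b]
    congr 1
    congr 1
    ext1 n
    congr 1
    unfold hd
    by_cases h : G.v n x.e = G.v n y.e
    · rw [if_pos h, if_pos h.symm, abs_sub_comm]
    · rw [if_neg h, if_neg (fun h' => h h'.symm), add_comm]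
  edist_triangle x y z := by
    apply max_le
    · exact (edist_triangle x.b y.b z.b).trans (add_le_add (le_max_left _ _) (le_max_left _ _))
    · apply iSup_le
      intro n
      refine (ENNReal.ofReal_le_ofReal (hd_triangle _ (G.v n y.e) _ _ (G.w n y.b) _
        (G.w_nonneg _ _) (G.w_nonneg _ _) (G.w_nonneg _ _))).trans ?_
      refine ENNReal.ofReal_add_le.trans (add_le_add ?_ ?_)
      · exact (le_iSup (fun n => ENNReal.ofReal (hd (G.v n x.e) (G.v n y.e) (G.w n x.b) (G.w n y.b)))
          n).trans (le_max_right _ _)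
      · exact (le_iSup (fun n => ENNReal.ofReal (hd (G.v n y.e) (G.v n z.e) (G.w n y.b) (G.w n z.b)))
          n).trans (le_max_right _ _)

theorem edist_pre {G : Glue E V B} (x y : Pre G) : edist x y = max (edist x.b y.b)
    (⨆ n, ENNReal.ofReal (hd (G.v n x.e) (G.v n y.e) (G.w n x.b) (G.w n y.b))) := rfl

abbrev Sp (G : Glue E V B) := SeparationQuotient (Pre G)

noncomputable def pt (G : Glue E V B) (e : E) (b : B) : Sp G := SeparationQuotient.mk ⟨e, b⟩

theorem pt_surj {G : Glue E V B} (y : Sp G) : ∃ e b, y = pt G e b := by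
  obtain ⟨⟨e, b⟩, rfl⟩ := SeparationQuotient.surjective_mk y
  exact ⟨e, b, rfl⟩

theorem edist_pt {G : Glue E V B} (e e' : E) (b b' : B) :
    edist (pt G e b) (pt G e' b') = max (edist b b')
    (⨆ n, ENNReal.ofReal (hd (G.v n e) (G.v n e') (G.w n b) (G.w n b'))) := by
  unfold pt
  rw [SeparationQuotient.edist_mk, edist_pre]

theorem pt_eq {G : Glue E V B} {e e' : E} {b b' : B} :
    pt G e b = pt G e' b' ↔ b = b' ∧ G.v (G.act b) e = G.v (G.act b) e' := by
  rw [← edist_eq_zero, edist_pt]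
  constructor
  · intro h
    rw [← nonpos_iff_eq_zero, max_le_iff, nonpos_iff_eq_zero, nonpos_iff_eq_zero, edist_eq_zero] at h
    obtain ⟨rfl, h⟩ := h
    refine ⟨rfl, ?_⟩
    rw [ENNReal.iSup_eq_zero] at h
    have := h (G.act b)
    rw [ENNReal.ofReal_eq_zero] at this
    unfold hd at this
    split_ifs at this with h1
    · exact h1
    · have := G.act_pos b
      linarith
  · rintro ⟨rfl, h⟩
    have := G.act_eq b e e' h
    rw [edist_self, ← nonpos_iff_eq_zero, max_le_iff, nonpos_iff_eq_zero, nonpos_iff_eq_zero,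
      ENNReal.iSup_eq_zero]
    refine ⟨rfl, ?_⟩
    intro n
    unfold hd
    rcases this n with h | h
    · simp [h]
    · simp [h]

theorem isometry_pt (G : Glue E V B) (e : E) : Isometry (pt G e) := by
  intro b b'
  rw [edist_pt, max_eq_left]
  apply iSup_le
  intro n
  rw [edist_dist]
  apply ENNReal.ofReal_le_ofReal
  simpa [hd] using G.w_lip n b b'

/-- projection -/
noncomputable def pr {G : Glue E V B} (y : Sp G) : B := (pt_surj y).choose_spec.choose

theorem pr_pt {G : Glue E V B} (e : E) (b : B) : pr (pt G e b) = b :=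
  ((pt_eq.1 (pt_surj (pt G e b)).choose_spec.choose_spec).1).symm

theorem continuous_pr {G : Glue E V B} : Continuous (pr (G := G)) := by
  have : LipschitzWith 1 (pr (G := G)) := by
    intro x y
    obtain ⟨e, b, rfl⟩ := pt_surj x
    obtain ⟨e', b', rfl⟩ := pt_surj y
    rw [pr_pt, pr_pt, edist_pt]
    simp
  exact this.continuous

/-- Near `pt e b`, all points have the same active coordinate. -/
theorem near {G : Glue E V B} (e : E) (b : B) : ∃ ε > 0, ∀ e' b',
    edist (pt G e' b') (pt G e b) < ε → G.v (G.act b) e' = G.v (G.act b) e := by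
  refine ⟨ENNReal.ofReal (G.w (G.act b) b), by simpa using G.act_pos b, ?_⟩
  intro e' b' h
  by_contra hne
  rw [edist_pt] at h
  have h1 := (le_iSup (fun n => ENNReal.ofReal (hd (G.v n e') (G.v n e) (G.w n b') (G.w n b)))
          (G.act b)).trans (le_max_right (edist b' b) _)
  have h2 := h1.trans_lt h
  rw [hd, if_neg hne, ENNReal.ofReal_lt_ofReal_iff (G.act_pos b)] at h2
  linarith [G.w_nonneg (G.act b) b']

/-- subspace carried by a set of indices -/
def sub (G : Glue E V B) (S : Set E) : Set (Sp G) := {y | ∃ e ∈ S, ∃ b, y = pt G e b}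

def Sat (G : Glue E V B) (S : Set E) : Prop := ∀ n e e', G.v n e = G.v n e' → e ∈ S → e' ∈ S

theorem mem_sub {G : Glue E V B} {S : Set E} (hS : Sat G S) {e b} : pt G e b ∈ sub G S ↔ e ∈ S := by
  constructor
  · rintro ⟨e', he', b', h⟩
    exact hS _ _ _ (pt_eq.1 h).2.symm he'
  · intro h
    exact ⟨e, h, b, rfl⟩

theorem isOpen_sub {G : Glue E V B} {S : Set E} (hS : Sat G S) : IsOpen (sub G S) := by
  rw [EMetric.isOpen_iff]
  rintro _ ⟨e, he, b, rfl⟩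
  obtain ⟨ε, hε, h⟩ := near (G := G) e b
  refine ⟨ε, hε, ?_⟩
  intro y hy
  obtain ⟨e', b', rfl⟩ := pt_surj y
  exact ⟨e', hS _ _ _ (h e' b' hy).symm he, b', rfl⟩

theorem isClopen_sub {G : Glue E V B} {S : Set E} (hS : Sat G S) : IsClopen (sub G S) := by
  refine ⟨?_, isOpen_sub hS⟩
  have hc : Sat G Sᶜ := fun n e e' h he he' => he (hS n e' e h.symm he')
  have : (sub G S)ᶜ = sub G Sᶜ := by
    ext y
    obtain ⟨e, b, rfl⟩ := pt_surj y
    rw [mem_compl_iff, mem_sub hS, mem_sub hc, mem_compl_iff]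
  rw [← isOpen_compl_iff, this]
  exact isOpen_sub hc

/-- closedness of subspaces carried by arbitrary index sets -/
theorem isClosed_sub {G : Glue E V B} (S : Set E) : IsClosed (sub G S) := by
  rw [← isOpen_compl_iff, EMetric.isOpen_iff]
  intro y hy
  obtain ⟨e, b, rfl⟩ := pt_surj y
  obtain ⟨ε, hε, h⟩ := near (G := G) e b
  refine ⟨ε, hε, ?_⟩
  rintro _ hy' ⟨e', he', b', rfl⟩
  refine hy ⟨e', he', b, pt_eq.2 ⟨rfl, (h e' b' hy').symm⟩⟩

def Emb (G : Glue E V B) (S : Set E) (φ : E → E) : Prop :=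
  ∀ e ∈ S, ∀ e' ∈ S, ∀ n, G.v n (φ e) = G.v n (φ e') ↔ G.v n e = G.v n e'

theorem closedEmb_of_emb {G : Glue E V B} {S T : Set E} (φ : E → E) (hφ : Emb G S φ)
    (hm : MapsTo φ S T) : HomeoToClosedSubset (sub G S) (sub G T) := by
  have hch : ∀ y : sub G S, ∃ e ∈ S, ∃ b, (y : Sp G) = pt G e b := fun y => y.2
  choose e he b hy using hch
  let f : sub G S → sub G T := fun y => ⟨pt G (φ (e y)) (b y), φ (e y), hm (he y), b y, rfl⟩
  have hf : Isometry f := by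
    intro y z
    rw [Subtype.edist_eq, Subtype.edist_eq, hy y, hy z, edist_pt, edist_pt]
    congr 1
    congr 1
    ext1 n
    unfold hd
    have := hφ _ (he y) _ (he z) n
    by_cases h : G.v n (e y) = G.v n (e z)
    · rw [if_pos h, if_pos (this.2 h)]
    · rw [if_neg h, if_neg (fun h' => h (this.1 h'))]
  have hr : range f = (Subtype.val : sub G T → Sp G) ⁻¹' (sub G (φ '' S)) := by
    ext z
    constructor
    · rintro ⟨y, rfl⟩
      exact ⟨φ (e y), ⟨_, he y, rfl⟩, b y, rfl⟩
    · rintro ⟨_, ⟨e', he', rfl⟩, b', h⟩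
      refine ⟨⟨pt G e' b', e', he', b', rfl⟩, ?_⟩
      apply Subtype.ext
      rw [h]
      have h1 := pt_eq.1 (hy ⟨pt G e' b', e', he', b', rfl⟩)
      have h2 := h1.1
      refine pt_eq.2 ⟨h2.symm, ?_⟩
      rw [← h2, hφ _ (he _) _ he']
      exact h1.2.symm
  refine ⟨range f, ?_, ⟨hf.isEmbedding.toHomeomorph⟩⟩
  rw [hr]
  exact (isClosed_sub _).preimage continuous_subtype_val

end QRep
namespace QRep
open Set Filter Topology

noncomputable def pn (n : ℕ) : Pl := ((n : ℝ), 0)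

def PP : Set Pl := range pn

theorem pn_dist {m n : ℕ} (h : m ≠ n) : 1 ≤ dist (pn m) (pn n) := by
  have h1 : dist (pn m) (pn n) = |(m : ℝ) - n| := by
    simp [pn, Prod.dist_eq, Real.dist_eq]
  rw [h1]
  have h2 : (1 : ℤ) ≤ |(m : ℤ) - n| := Int.one_le_abs (by omega)
  exact_mod_cast h2

theorem pn_inj : Function.Injective pn := by
  intro m n h
  by_contra hne
  have := pn_dist hne
  rw [h, dist_self] at this
  linarith

theorem isClosed_PP : IsClosed PP := by
  have : PP = range (Nat.cast : ℕ → ℝ) ×ˢ {(0 : ℝ)} := by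
    ext ⟨x, y⟩
    constructor
    · rintro ⟨n, hn⟩
      simp only [pn, Prod.mk.injEq] at hn
      exact ⟨⟨n, hn.1⟩, hn.2.symm⟩
    · rintro ⟨⟨n, hn⟩, hy⟩
      refine ⟨n, ?_⟩
      simp only [mem_singleton_iff] at hy hn
      simp [pn, hy, hn]
  rw [this]
  exact Nat.isClosedEmbedding_coe_real.isClosed_range.prod isClosed_singleton

theorem countable_PP : PP.Countable := countable_range _

noncomputable def AA : Set Pl := (exists_rigid PP countable_PP).choose

theorem AA_disj : Disjoint AA PP := (exists_rigid PP countable_PP).choose_spec.1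
theorem AA_conn : IsPreconnected AA := (exists_rigid PP countable_PP).choose_spec.2.1
theorem AA_dense : Dense AA := (exists_rigid PP countable_PP).choose_spec.2.2.1
theorem AA_rigid : ∀ (O : Set Pl) (g : Pl → Pl), IsOpen O → ContinuousOn g (O ∩ AA) →
    InjOn g (O ∩ AA) → MapsTo g (O ∩ AA) AA → ∀ x ∈ O ∩ AA, g x = x :=
  (exists_rigid PP countable_PP).choose_spec.2.2.2

abbrev BB : Type := ↥(AA ∪ PP)

theorem BB_mem {b : BB} (h : (b : Pl) ∉ PP) : (b : Pl) ∈ AA := b.2.resolve_right h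

noncomputable def ww : ℕ → BB → ℝ
  | 0, b => Metric.infDist (b : Pl) PP
  | n + 1, b => max 0 (1 - dist (b : Pl) (pn n))

open Classical in
noncomputable def aa (b : BB) : ℕ := if h : (b : Pl) ∈ PP then h.choose + 1 else 0

theorem aa_zero {b : BB} (h : (b : Pl) ∉ PP) : aa b = 0 := dif_neg h

theorem aa_pn {b : BB} {n : ℕ} (h : (b : Pl) = pn n) : aa b = n + 1 := by
  have h' : (b : Pl) ∈ PP := ⟨n, h.symm⟩
  unfold aa
  rw [dif_pos h']
  rw [pn_inj (h'.choose_spec.trans h)]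

theorem aa_surj (n : ℕ) : ∃ b, aa b = n := by
  cases n with
  | zero =>
    obtain ⟨x, hx⟩ := AA_dense.nonempty
    exact ⟨⟨x, Or.inl hx⟩, aa_zero (Set.disjoint_left.1 AA_disj hx)⟩
  | succ n => exact ⟨⟨pn n, Or.inr ⟨n, rfl⟩⟩, aa_pn rfl⟩

variable {E : Type*} {V : Type*}

noncomputable def mkGlue (v : ℕ → E → V) (hv : Function.Injective (v 0)) : Glue E V BB where
  v := v
  w := ww
  w_nonneg := by
    rintro (_ | n) b
    · exact Metric.infDist_nonneg
    · exact le_max_left _ _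
  w_lip := by
    rintro (_ | n) b b'
    · have := (Metric.lipschitz_infDist_pt PP).dist_le_mul (b : Pl) b'
      simpa [ww, Real.dist_eq, Subtype.dist_eq] using this
    · simp only [ww]
      rw [max_comm 0, max_comm 0]
      refine (abs_max_sub_max_le_abs _ _ _).trans ?_
      have h1 := abs_dist_sub_le (b : Pl) b' (pn n)
      rw [Subtype.dist_eq]
      rw [abs_sub_comm] at h1
      have h2 : 1 - dist (b : Pl) (pn n) - (1 - dist (b' : Pl) (pn n)) =
          dist (b' : Pl) (pn n) - dist (b : Pl) (pn n) := by ring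
      rw [h2]
      exact h1
  act := aa
  act_pos := by
    intro b
    by_cases h : (b : Pl) ∈ PP
    · obtain ⟨n, hn⟩ := h
      rw [aa_pn hn.symm]
      simp [ww, hn]
    · rw [aa_zero h]
      exact (isClosed_PP.notMem_iff_infDist_pos ⟨_, 0, rfl⟩).1 h
  act_eq := by
    intro b e e' h n
    by_cases hb : (b : Pl) ∈ PP
    · obtain ⟨m, hm⟩ := hb
      rw [aa_pn hm.symm] at h
      cases n with
      | zero =>
        right
        simp only [ww]
        exact Metric.infDist_zero_of_mem ⟨m, hm⟩
      | succ n =>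
        by_cases hmn : m = n
        · subst hmn
          exact Or.inl h
        · right
          simp only [ww, ← hm]
          have := pn_dist hmn
          exact max_eq_left (by linarith)
    · rw [aa_zero hb] at h
      rw [hv h]
      exact Or.inl rfl

def iA (a : AA) : BB := ⟨a, Or.inl a.2⟩

theorem iA_cont : Continuous iA := by
  unfold iA
  fun_prop

theorem iA_dense : DenseRange iA := by
  intro b
  rw [closure_subtype, ← range_comp]
  have : range ((Subtype.val : BB → Pl) ∘ iA) = AA := by
    ext x
    constructor
    · rintro ⟨a, rfl⟩
      exact a.2
    · intro h
      exact ⟨⟨x, h⟩, rfl⟩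
  rw [this]
  exact AA_dense _

theorem iA_inj : Function.Injective iA := by
  intro a b h
  have : (iA a : Pl) = iA b := by rw [h]
  exact Subtype.ext this

theorem iA_notMem (a : AA) : (iA a : Pl) ∉ PP := Set.disjoint_left.1 AA_disj a.2

theorem core (G : Glue E V BB) (hact : ∀ b, G.act b = aa b) (hv : Function.Injective (G.v 0))
    (g : BB → Sp G)
    (hg : Continuous g) (hinj : Function.Injective g) : ∃ e, ∀ b, g b = pt _ e b := by
  have : PreconnectedSpace AA := Subtype.preconnectedSpace AA_conn
  let edge : E → Set (Sp G) := fun e => {y | ∃ b : BB, (b : Pl) ∉ PP ∧ y = pt G e b}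
  have hedge : ∀ e, IsOpen (edge e) := by
    intro e
    have h1 : IsOpen ((fun y : Sp G => (pr (G := G) y).1) ⁻¹' PPᶜ) :=
      isClosed_PP.isOpen_compl.preimage (continuous_subtype_val.comp continuous_pr)
    rw [isOpen_iff_mem_nhds]
    rintro _ ⟨b, hb, rfl⟩
    obtain ⟨ε, hε, h⟩ := near (G := G) e b
    have h2 := h1.mem_nhds (x := pt G e b) (by
      change ((pr (pt G e b) : BB) : Pl) ∉ PP
      rw [pr_pt]; exact hb)
    filter_upwards [h2, Metric.eball_mem_nhds _ hε] with y hy hy'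
    obtain ⟨e', b', rfl⟩ := pt_surj y
    change ((pr (pt G e' b') : BB) : Pl) ∉ PP at hy
    rw [pr_pt] at hy
    have h3 := h e' b' hy'
    rw [hact, aa_zero hb] at h3
    rw [hv h3]
    exact ⟨b', hy, rfl⟩
  have hfix : ∀ e (a : AA), g (iA a) ∈ edge e → g (iA a) = pt G e (iA a) := by
    intro e a ha
    have hopen : IsOpen ((fun a : AA => g (iA a)) ⁻¹' edge e) :=
      (hedge e).preimage (hg.comp iA_cont)
    obtain ⟨O, hO, hOe⟩ := isOpen_induced_iff.1 hopen
    have hOe' : ∀ x : AA, (x : Pl) ∈ O ↔ g (iA x) ∈ edge e := fun x => by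
      have := Set.ext_iff.1 hOe x
      exact this
    classical
    let g' : Pl → Pl := fun x => if h : x ∈ AA then (pr (G := G) (g (iA ⟨x, h⟩))).1 else x
    have hg' : ∀ x : AA, g' x = (pr (G := G) (g (iA x))).1 := fun x => dif_pos x.2
    have hcont : ContinuousOn g' AA := by
      rw [continuousOn_iff_continuous_domRestrict]
      have : AA.domRestrict g' = fun x : AA => (pr (G := G) (g (iA x))).1 := by
        ext1 x
        exact hg' x
      rw [this]
      exact continuous_subtype_val.comp (continuous_pr.comp (hg.comp iA_cont))
    have hval : ∀ x : AA, (x : Pl) ∈ O → (g' x ∈ AA ∧ g (iA x) = pt G e (pr (g (iA x)))) := by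
      intro x hx
      obtain ⟨b, hb, h⟩ := (hOe' x).1 hx
      rw [hg', h, pr_pt]
      exact ⟨BB_mem hb, rfl⟩
    have := AA_rigid O g' hO (hcont.mono inter_subset_right) (by
      intro x hx y hy hxy
      have h1 := (hval ⟨x, hx.2⟩ hx.1).2
      have h2 := (hval ⟨y, hy.2⟩ hy.1).2
      have h3 : pr (g (iA ⟨x, hx.2⟩)) = pr (g (iA ⟨y, hy.2⟩)) := by
        apply Subtype.ext
        rw [← hg', ← hg']
        exact hxy
      rw [h3, ← h2] at h1
      exact congrArg Subtype.val (iA_inj (hinj h1))) (fun x hx => (hval ⟨x, hx.2⟩ hx.1).1)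
      a ⟨(hOe' a).2 ha, a.2⟩
    rw [hg'] at this
    have h4 : pr (g (iA a)) = iA a := Subtype.ext this
    have h5 := (hval a ((hOe' a).2 ha)).2
    rwa [h4] at h5
  by_cases hex : ∃ (a : AA) (e : E), g (iA a) ∈ edge e
  · obtain ⟨a, e, hae⟩ := hex
    refine ⟨e, ?_⟩
    have hcl : IsClopen ((fun a : AA => g (iA a)) ⁻¹' edge e) := by
      refine ⟨?_, (hedge e).preimage (hg.comp iA_cont)⟩
      have : (fun a : AA => g (iA a)) ⁻¹' edge e = {a | g (iA a) = pt G e (iA a)} := by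
        ext x
        constructor
        · exact hfix e x
        · intro h
          exact ⟨iA x, iA_notMem x, h⟩
      rw [this]
      exact isClosed_eq (hg.comp iA_cont) ((isometry_pt G e).continuous.comp iA_cont)
    have huniv := hcl.eq_univ ⟨a, hae⟩
    have h1 : g ∘ iA = pt G e ∘ iA := by
      funext x
      exact hfix e x (huniv ▸ mem_univ x : x ∈ (fun a : AA => g (iA a)) ⁻¹' edge e)
    have h2 := iA_dense.equalizer hg (isometry_pt G e).continuous h1
    intro b
    rw [h2]
  · exfalso
    push Not at hex
    have hP : ∀ a : AA, ∃ e, ∃ b : BB, (b : Pl) ∈ PP ∧ g (iA a) = pt G e b := by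
      intro a
      obtain ⟨e, b, h⟩ := pt_surj (g (iA a))
      refine ⟨e, b, ?_, h⟩
      by_contra hb
      exact hex a e ⟨b, hb, h⟩
    obtain ⟨x, hx, hxA⟩ := Metric.dense_iff.1 AA_dense (0, 0) 1 one_pos
    obtain ⟨y, hy, hyA⟩ := Metric.dense_iff.1 AA_dense (5, 0) 1 one_pos
    obtain ⟨e, p, hp, hgp⟩ := hP ⟨x, hxA⟩
    have hcl : IsClopen {a : AA | g (iA a) = g (iA ⟨x, hxA⟩)} := by
      refine ⟨isClosed_eq (hg.comp iA_cont) continuous_const, ?_⟩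
      rw [isOpen_iff_mem_nhds]
      intro a ha
      obtain ⟨ε, hε, h⟩ := near (G := G) e p
      have hga : g (iA a) = pt G e p := ha.trans hgp
      have hn : Metric.eball (pt G e p) (min ε 1) ∈ 𝓝 (g (iA a)) := by
        rw [hga]
        exact Metric.eball_mem_nhds _ (lt_min hε one_pos)
      filter_upwards [(hg.comp iA_cont).continuousAt.preimage_mem_nhds hn] with z hz
      obtain ⟨e', b', hb', hz'⟩ := hP z
      change edist (g (iA z)) (pt G e p) < min ε 1 at hz
      change g (iA z) = _
      rw [hz'] at hz ⊢
      rw [hgp]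
      have hbp : b' = p := by
        have h1 := (hz.trans_le (min_le_right _ _))
        rw [edist_pt] at h1
        have h2 := (le_max_left _ _).trans_lt h1
        obtain ⟨m, hm⟩ := hb'
        obtain ⟨n, hn⟩ := hp
        rw [edist_dist, Subtype.dist_eq, ENNReal.ofReal_lt_one, ← hm, ← hn] at h2
        apply Subtype.ext
        rw [← hm, ← hn]
        by_contra hne
        have := pn_dist (fun hmn : m = n => hne (by rw [hmn]))
        linarith
      subst hbp
      exact pt_eq.2 ⟨rfl, h e' b' (hz.trans_le (min_le_left _ _))⟩
    have huniv := hcl.eq_univ ⟨⟨x, hxA⟩, rfl⟩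
    have h1 : g (iA ⟨y, hyA⟩) = g (iA ⟨x, hxA⟩) :=
      (huniv ▸ mem_univ _ : (⟨y, hyA⟩ : AA) ∈ {a : AA | g (iA a) = g (iA ⟨x, hxA⟩)})
    have h2 : y = x := congrArg Subtype.val (iA_inj (hinj h1))
    subst h2
    rw [Metric.mem_ball, Prod.dist_eq, max_lt_iff, Real.dist_eq, abs_lt] at hx hy
    dsimp only at hx hy
    linarith [hx.1.1, hx.1.2, hy.1.1, hy.1.2]

theorem emb_of_inj {v : ℕ → E → V} {hv : Function.Injective (v 0)} {S T : Set E}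
    (hT : Sat (mkGlue v hv) T)
    (f : sub (mkGlue v hv) S → sub (mkGlue v hv) T) (hf : Continuous f)
    (hinj : Function.Injective f) :
    ∃ φ : E → E, MapsTo φ S T ∧ Emb (mkGlue v hv) S φ ∧
      ∀ e (he : e ∈ S) b, (f ⟨pt _ e b, e, he, b, rfl⟩ : Sp (mkGlue v hv)) = pt _ (φ e) b := by
  classical
  have h1 : ∀ e (he : e ∈ S), ∃ e', ∀ b,
      (f ⟨pt _ e b, e, he, b, rfl⟩ : Sp (mkGlue v hv)) = pt _ e' b := by
    intro e he
    refine core (mkGlue v hv) (fun _ => rfl) hv (fun b => (f ⟨pt _ e b, e, he, b, rfl⟩ : Sp (mkGlue v hv))) ?_ ?_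
    · exact continuous_subtype_val.comp (hf.comp ((isometry_pt _ e).continuous.subtype_mk _))
    · intro b b' h
      have := hinj (Subtype.ext h)
      exact (pt_eq.1 (congrArg Subtype.val this)).1
  choose φ hφ using h1
  refine ⟨fun e => if h : e ∈ S then φ e h else e, ?_, ?_, ?_⟩
  · intro e he
    simp only [dif_pos he]
    obtain ⟨b, -⟩ := aa_surj 0
    rw [← mem_sub hT (b := b), ← hφ e he b]
    exact Subtype.coe_prop _
  · intro e he e' he' n
    simp only [dif_pos he, dif_pos he']
    obtain ⟨b, rfl⟩ := aa_surj n
    have h2 : pt (mkGlue v hv) (φ e he) b = pt _ (φ e' he') b ↔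
        pt (mkGlue v hv) e b = pt _ e' b := by
      rw [← hφ, ← hφ]
      constructor
      · intro h
        exact congrArg Subtype.val (hinj (Subtype.ext h))
      · intro h
        congr 2
        exact Subtype.ext h
    rw [pt_eq, pt_eq] at h2
    exact ⟨fun h => (h2.1 ⟨rfl, h⟩).2, fun h => (h2.2 ⟨rfl, h⟩).2⟩
  · intro e he b
    simp only [dif_pos he]
    exact hφ e he b

end QRep
namespace QRep
open Set Filter Topology

theorem exists_ladder (O : Type*) [LinearOrder O] : ∃ l : O → ℕ → O, ∀ y,
    IsLUB (range (l y)) y ∧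
    ((∃ s : ℕ → O, (∀ n, s n < y) ∧ IsLUB (range s) y) → ∀ n, l y n < y) := by
  have : ∀ y : O, ∃ s : ℕ → O, IsLUB (range s) y ∧
    ((∃ s : ℕ → O, (∀ n, s n < y) ∧ IsLUB (range s) y) → ∀ n, s n < y) := by
    intro y
    by_cases h : ∃ s : ℕ → O, (∀ n, s n < y) ∧ IsLUB (range s) y
    · obtain ⟨s, hs, hs'⟩ := h
      exact ⟨s, hs', fun _ => hs⟩
    · exact ⟨fun _ => y, by simp, fun h' => absurd h' h⟩
  choose l hl using this
  exact ⟨l, hl⟩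

/-- Rigidity of a well-order with a ladder system. -/
theorem ladder_rigid {O : Type*} [LinearOrder O] [WellFoundedLT O] [OrderTop O]
    {l : O → ℕ → O} (hl : ∀ y, IsLUB (range (l y)) y ∧
    ((∃ s : ℕ → O, (∀ n, s n < y) ∧ IsLUB (range s) y) → ∀ n, l y n < y))
    {f : O → O} (hf : StrictMono f) (hfl : ∀ y n, f (l y n) = l (f y) n) (x : O) : f x = x := by
  by_contra hne
  have hlt : x < f x := lt_of_le_of_ne hf.le_apply (Ne.symm hne)
  let s : ℕ → O := fun n => f^[n] x
  have hs1 : ∀ n, s (n + 1) = f (s n) := fun n => Function.iterate_succ_apply' f n x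
  have hs : StrictMono s := by
    apply strictMono_nat_of_lt_succ
    intro n
    induction n with
    | zero => exact hlt
    | succ n ih =>
      rw [hs1 (n + 1), hs1 n]
      rw [hs1 n] at ih
      exact hf ih
  obtain ⟨L, hL⟩ : ∃ L, IsLUB (range s) L := by
    have hne : (upperBounds (range s)).Nonempty := ⟨⊤, fun _ _ => le_top⟩
    exact ⟨(wellFounded_lt (α := O)).min _ hne, WellFounded.min_mem _ _ hne,
      fun y hy => WellFounded.min_le _ hy⟩
  have hsL : ∀ n, s n < L := fun n => (hs (Nat.lt_succ_self n)).trans_le (hL.1 ⟨n + 1, rfl⟩)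
  have hlL := (hl L).2 ⟨s, hsL, hL⟩
  have hfL : f L = L := by
    apply le_antisymm _ hf.le_apply
    apply (hl (f L)).1.2
    rintro _ ⟨n, rfl⟩
    rw [← hfl]
    obtain ⟨_, ⟨m, rfl⟩, hm⟩ := (lt_isLUB_iff hL).1 (hlL n)
    have := hf hm
    rw [← hs1] at this
    exact (this.trans (hsL _)).le
  have hfix : ∀ n, f (l L n) = l L n := by
    intro n
    rw [hfl, hfL]
  obtain ⟨_, ⟨n, rfl⟩, hn⟩ := (lt_isLUB_iff (hl L).1).1 (hsL 0)
  -- all s m lie below l L n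
  have hall : ∀ m, s m ≤ l L n := by
    intro m
    induction m with
    | zero => exact hn.le
    | succ m ih =>
      rw [hs1, ← hfix n]
      exact hf.monotone ih
  exact absurd (hL.2 (by rintro _ ⟨m, rfl⟩; exact hall m)) (not_le.2 (hlL n))

abbrev El (O : Type*) := O × ℕ × ((O × O) ⊕ ℕ)

abbrev Lab (O : Type*) := El O ⊕ ((O × ℕ) × O)

variable {O : Type*} [LinearOrder O] [OrderTop O]

def Good : El O → Prop
  | (_, _, Sum.inl _) => True
  | (_, n, Sum.inr k) => k < n

def Col (l : O → ℕ → O) : ℕ → O → O → O → Prop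
  | 0, _, x, y => x = y
  | 1, _, x, y => x < y
  | 2, i, x, y => x = i ∧ (y = i ∨ y = ⊤)
  | n + 3, _, x, y => x = l y n

open Classical in
noncomputable def vv (l : O → ℕ → O) : ℕ → El O → Lab O
  | 0, e => Sum.inl e
  | 1, e => if Good e then Sum.inr ((e.1, e.2.1), ⊤) else Sum.inl e
  | 2, (i, n, Sum.inl p) => Sum.inr ((i, n), p.1)
  | 3, (i, n, Sum.inl p) => Sum.inr ((i, n), p.2)
  | k + 4, (i, n, Sum.inl p) =>
      if Col l k i p.1 p.2 then Sum.inr ((i, n), ⊤) else Sum.inl (i, n, Sum.inl p)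
  | _ + 2, (i, n, Sum.inr k) => Sum.inl (i, n, Sum.inr k)

theorem vv_inj (l : O → ℕ → O) : Function.Injective (vv l 0) := by
  intro e e' h
  simpa [vv] using h

theorem vv_cases (l : O → ℕ → O) (k : ℕ) (e : El O) :
    vv l k e = Sum.inl e ∨ (Good e ∧ ∃ z, vv l k e = Sum.inr ((e.1, e.2.1), z)) := by
  obtain ⟨i, n, p | j⟩ := e
  · match k with
    | 0 => simp [vv]
    | 1 => simp [vv, Good]
    | 2 => simp [vv, Good]
    | 3 => simp [vv, Good]
    | k + 4 =>
      by_cases h : Col l k i p.1 p.2 <;> simp [vv, Good, h]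
  · match k with
    | 0 => simp [vv]
    | 1 => by_cases h : j < n <;> simp [vv, Good, h]
    | k + 2 => simp [vv]

theorem vv_eq {l : O → ℕ → O} {k : ℕ} {e e' : El O} (h : vv l k e = vv l k e') :
    e = e' ∨ (Good e ∧ Good e' ∧ e.1 = e'.1 ∧ e.2.1 = e'.2.1 ∧
      ∃ z, vv l k e = Sum.inr ((e.1, e.2.1), z)) := by
  rcases vv_cases l k e with h1 | ⟨h1, z, h2⟩
  · rcases vv_cases l k e' with h3 | ⟨h3, z', h4⟩
    · rw [h1, h3] at h
      exact Or.inl (Sum.inl.inj h)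
    · rw [h1, h4] at h
      cases h
  · rcases vv_cases l k e' with h3 | ⟨h3, z', h4⟩
    · rw [h2, h3] at h
      cases h
    · right
      have h5 := h
      rw [h2, h4] at h5
      have h6 := Sum.inr.inj h5
      simp only [Prod.mk.injEq] at h6
      exact ⟨h1, h3, h6.1.1, h6.1.2, z, h2⟩

def sh (e : El O) : El O := (e.1, e.2.1 + 1, e.2.2)

theorem good_sh {e : El O} (h : Good e) : Good (sh e) := by
  obtain ⟨i, n, p | j⟩ := e
  · trivial
  · change j < n + 1
    change j < n at h
    omega

theorem vv_sh (l : O → ℕ → O) (k : ℕ) {e e' : El O} (h : Good e) (h' : Good e') :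
    vv l k (sh e) = vv l k (sh e') ↔ vv l k e = vv l k e' := by
  have g := good_sh h
  have g' := good_sh h'
  match k with
  | 0 => 
    simp [vv, sh, Prod.ext_iff]
  | 1 =>
    simp only [vv, if_pos h, if_pos h', if_pos g, if_pos g']
    simp [sh]
  | 2 =>
    obtain ⟨i, n, p | j⟩ := e <;> obtain ⟨i', n', p' | j'⟩ := e' <;> simp [vv, sh]
  | 3 =>
    obtain ⟨i, n, p | j⟩ := e <;> obtain ⟨i', n', p' | j'⟩ := e' <;> simp [vv, sh]
  | k + 4 =>
    obtain ⟨i, n, p | j⟩ := e <;> obtain ⟨i', n', p' | j'⟩ := e'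
    · by_cases c : Col l k i p.1 p.2 <;> by_cases c' : Col l k i' p'.1 p'.2 <;>
        simp [vv, sh, c, c']
    · by_cases c : Col l k i p.1 p.2 <;> simp [vv, sh, c]
    · by_cases c' : Col l k i' p'.1 p'.2 <;> simp [vv, sh, c']
    · simp [vv, sh]

def WW (i : O) (n : ℕ) : Set (El O) := {e | Good e ∧ e.1 = i ∧ e.2.1 = n}

theorem struct [WellFoundedLT O] [Infinite O] {l : O → ℕ → O}
    (hl : ∀ y, IsLUB (range (l y)) y ∧
    ((∃ s : ℕ → O, (∀ n, s n < y) ∧ IsLUB (range s) y) → ∀ n, l y n < y))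
    {i : O} (hi : i ≠ ⊤) {n : ℕ} {φ : El O → El O}
    (hφ : ∀ e ∈ WW i n, ∀ e' ∈ WW i n, ∀ k, vv l k (φ e) = vv l k (φ e') ↔ vv l k e = vv l k e') :
    ∃ m, n ≤ m ∧ ∀ e ∈ WW i n, φ e ∈ WW i m := by
  have hW : ∀ x y, ((i, n, Sum.inl (x, y)) : El O) ∈ WW i n := fun x y => ⟨trivial, rfl, rfl⟩
  have hinj : ∀ e ∈ WW i n, ∀ e' ∈ WW i n, φ e = φ e' → e = e' := by
    intro e he e' he' h
    exact vv_inj l ((hφ e he e' he' 0).1 (by rw [h]))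
  -- the basic step
  have step : ∀ k, ∀ e ∈ WW i n, ∀ e' ∈ WW i n, e ≠ e' → vv l k e = vv l k e' →
      Good (φ e) ∧ (φ e).1 = (φ e').1 ∧ (φ e).2.1 = (φ e').2.1 ∧
        ∃ z, vv l k (φ e) = Sum.inr (((φ e).1, (φ e).2.1), z) := by
    intro k e he e' he' hne h
    rcases vv_eq ((hφ e he e' he' k).2 h) with h1 | ⟨h1, h2, h3, h4, h5⟩
    · exact absurd (hinj e he e' he' h1) hne
    · exact ⟨h1, h3, h4, h5⟩
  have hother : ∀ x : O, ∃ y, y ≠ x := exists_ne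
  obtain ⟨j, m, hjm⟩ : ∃ j m, ∀ e ∈ WW i n, φ e ∈ WW j m := by
    let e0 : El O := (i, n, Sum.inl (⊤, ⊤))
    have he0 : e0 ∈ WW i n := hW _ _
    have h1 : ∀ e ∈ WW i n, vv l 1 e = vv l 1 e0 := by
      intro e he
      simp only [vv, if_pos he.1, if_pos he0.1, he.2.1, he.2.2]
      rfl
    refine ⟨(φ e0).1, (φ e0).2.1, fun e he => ?_⟩
    by_cases hne : e = e0
    · obtain ⟨y, hy⟩ := hother ⊤
      have := step 1 e he (i, n, Sum.inl (y, y)) (hW _ _) (by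
        rw [hne]
        simp [e0, hy.symm]) ((h1 e he).trans (h1 _ (hW _ _)).symm)
      rw [hne] at this ⊢
      exact ⟨this.1, rfl, rfl⟩
    · have := step 1 e he e0 he0 hne (h1 e he)
      exact ⟨this.1, this.2.1, this.2.2.1⟩
  -- colours
  have hcol : ∀ k x y x' y', (x, y) ≠ (x', y') → Col l k i x y → Col l k i x' y' →
      ∃ a b, φ (i, n, Sum.inl (x, y)) = (j, m, Sum.inl (a, b)) ∧ Col l k j a b := by
    intro k x y x' y' hne h h'
    obtain ⟨-, -, -, z, hz⟩ := step (k + 4) (i, n, Sum.inl (x, y)) (hW _ _)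
      (i, n, Sum.inl (x', y')) (hW _ _) (by simpa using hne) (by simp [vv, h, h'])
    obtain ⟨-, hj1, hm1⟩ := hjm _ (hW x y)
    generalize hE : φ (i, n, Sum.inl (x, y)) = E at *
    obtain ⟨j', m', ⟨a, b⟩ | r⟩ := E
    · simp only at hj1 hm1
      subst hj1 hm1
      refine ⟨a, b, rfl, ?_⟩
      by_contra hc
      simp [vv, hc] at hz
    · simp [vv] at hz
  have hdiag : ∀ x, ∃ a, φ (i, n, Sum.inl (x, x)) = (j, m, Sum.inl (a, a)) := by
    intro x
    obtain ⟨y, hy⟩ := hother x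
    obtain ⟨a, b, h1, h2⟩ := hcol 0 x x y y (by simp [hy.symm]) rfl rfl
    have h3 : a = b := h2
    subst h3
    exact ⟨a, h1⟩
  choose f hf using hdiag
  have hpair : ∀ x y, φ (i, n, Sum.inl (x, y)) = (j, m, Sum.inl (f x, f y)) := by
    intro x y
    have h2 := (hφ _ (hW x y) _ (hW x x) 2).2 (by simp [vv])
    have h3 := (hφ _ (hW x y) _ (hW y y) 3).2 (by simp [vv])
    rw [hf] at h2 h3
    obtain ⟨-, hj1, hm1⟩ := hjm _ (hW x y)
    generalize hE : φ (i, n, Sum.inl (x, y)) = E at *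
    obtain ⟨j', m', ⟨a, b⟩ | r⟩ := E
    · simp only at hj1 hm1
      subst hj1 hm1
      simp [vv] at h2 h3
      rw [h2, h3]
    · simp [vv] at h2
  have hcol' : ∀ k x y x' y', (x, y) ≠ (x', y') → Col l k i x y → Col l k i x' y' →
      Col l k j (f x) (f y) := by
    intro k x y x' y' hne h h'
    obtain ⟨a, b, h1, h2⟩ := hcol k x y x' y' hne h h'
    rw [hpair] at h1
    simp only [Prod.mk.injEq, Sum.inl.injEq, true_and] at h1
    rw [h1.1, h1.2]
    exact h2
  have hmono : StrictMono f := by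
    intro x y hxy
    obtain ⟨z, hz⟩ := Infinite.exists_notMem_finset ({x, y} : Finset O)
    simp only [Finset.mem_insert, Finset.mem_singleton, not_or] at hz
    rcases lt_or_gt_of_ne hz.1 with h | h
    · exact hcol' 1 x y z x (by simp [Ne.symm hz.1]) hxy h
    · exact hcol' 1 x y x z (by simp [Ne.symm hz.2]) hxy h
  have hlad : ∀ y k, f (l y k) = l (f y) k := by
    intro y k
    obtain ⟨y', hy'⟩ := hother y
    exact hcol' (k + 3) (l y k) y (l y' k) y' (by simp [hy'.symm]) rfl rfl
  have hid : ∀ x, f x = x := ladder_rigid hl hmono hlad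
  have hij : i = j := by
    have := hcol' 2 i i i ⊤ (by simp [hi]) ⟨rfl, Or.inl rfl⟩ ⟨rfl, Or.inr rfl⟩
    rw [hid] at this
    exact this.1
  subst hij
  refine ⟨m, ?_, hjm⟩
  have hex : ∀ k : Fin n, ∃ r : Fin m, φ (i, n, Sum.inr (k : ℕ)) = (i, m, Sum.inr (r : ℕ)) := by
    intro k
    have hk : ((i, n, Sum.inr (k : ℕ)) : El O) ∈ WW i n := ⟨k.2, rfl, rfl⟩
    obtain ⟨hg, hj1, hm1⟩ := hjm _ hk
    generalize hE : φ (i, n, Sum.inr (k : ℕ)) = E at *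
    obtain ⟨j', m', ⟨a, b⟩ | r⟩ := E
    · exfalso
      simp only at hj1 hm1
      subst hj1 hm1
      have h1 := hpair a b
      rw [hid, hid, ← hE] at h1
      have := hinj _ (hW a b) _ hk h1
      simp at this
    · simp only at hj1 hm1
      subst hj1 hm1
      exact ⟨⟨r, hg⟩, rfl⟩
  choose r hr using hex
  have hrinj : Function.Injective r := by
    intro k k' h
    have h1 := hinj (i, n, Sum.inr (k : ℕ)) ⟨k.2, rfl, rfl⟩ (i, n, Sum.inr (k' : ℕ))
      ⟨k'.2, rfl, rfl⟩ (by rw [hr, hr, h])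
    simp only [Prod.mk.injEq, Sum.inr.injEq, true_and] at h1
    exact Fin.ext h1
  simpa using Fintype.card_le_of_injective r hrinj

end QRep
namespace QRep
open Set Filter Topology

theorem main (α : Cardinal.{u}) (hα : Cardinal.continuum ≤ α) :
    ∃ (X : Type u) (tX : TopologicalSpace X),
      @TopologicalSpace.MetrizableSpace X tX ∧ #X = α ∧
      @RepresentsByClosedEmb α X tX := by
  have hα0 : ℵ₀ ≤ α := aleph0_le_continuum.trans hα
  let O : Type u := WithTop α.ord.ToType
  have hO : #O = α := by
    change #(Option α.ord.ToType) = α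
    rw [mk_option, mk_ord_toType, add_one_eq hα0]
  have : Infinite O := infinite_iff.2 (hO ▸ hα0)
  obtain ⟨l, hl⟩ := exists_ladder O
  let G := mkGlue (vv l) (vv_inj l)
  have hE : #(El O) = α := by
    simp only [mk_prod, mk_sum, Cardinal.lift_id, mk_nat, Cardinal.lift_uzero, hO,
      Cardinal.lift_aleph0]
    rw [mul_eq_self hα0, add_eq_left hα0 hα0, aleph0_mul_eq hα0, mul_eq_self hα0]
  refine ⟨Sp G, inferInstance, inferInstance, ?_, ?_⟩
  · apply le_antisymm
    · have h1 : Function.Surjective (fun p : El O × BB => pt G p.1 p.2) := by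
        intro y
        obtain ⟨e, b, rfl⟩ := pt_surj y
        exact ⟨(e, b), rfl⟩
      refine (mk_le_of_surjective h1).trans ?_
      rw [mk_prod, Cardinal.lift_uzero, hE]
      have h2 : #BB ≤ 𝔠 := (mk_set_le _).trans mk_Pl.le
      have h3 : Cardinal.lift.{u} #BB ≤ α := by
        refine le_trans ?_ hα
        rw [← Cardinal.lift_continuum.{u, 0}]
        exact Cardinal.lift_le.2 h2
      exact (mul_le_mul_right h3 _).trans (mul_eq_self hα0).le
    · rw [← hE]
      obtain ⟨b, hb⟩ := aa_surj 0
      refine mk_le_of_injective (f := fun e => pt G e b) ?_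
      intro e e' h
      have := (pt_eq.1 h).2
      change vv l (aa b) e = vv l (aa b) e' at this
      rw [hb] at this
      exact vv_inj l this
  · intro Q le hQ hrefl htrans
    obtain ⟨ι0⟩ : Nonempty (Q ↪ α.ord.ToType) := by
      rw [← Cardinal.le_def, mk_ord_toType]
      exact hQ
    let ι : Q → O := fun q => ((ι0 q : α.ord.ToType) : WithTop α.ord.ToType)
    have hι : Function.Injective ι := fun a b h => ι0.injective (WithTop.coe_injective h)
    have hιtop : ∀ q, ι q ≠ ⊤ := fun q => WithTop.coe_ne_top
    let S : Q → Set (El O) := fun q =>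
      {e | Good e ∧ ∃ p, le p q ∧ e.1 = ι p ∧ (1 ≤ e.2.1 ∨ p = q)}
    have hS : ∀ q, Sat G (S q) := by
      rintro q k e e' h ⟨he, p, h1, h2, h3⟩
      rcases vv_eq (l := l) (k := k) h with rfl | ⟨h4, h5, h6, h7, -⟩
      · exact ⟨he, p, h1, h2, h3⟩
      · exact ⟨h5, p, h1, h6 ▸ h2, h7 ▸ h3⟩
    have hW : ∀ q, WW (ι q) 0 ⊆ S q := by
      rintro q e ⟨h1, h2, h3⟩
      exact ⟨h1, q, hrefl q, h2, Or.inr rfl⟩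
    have hne : ∀ q, ((ι q, 0, Sum.inl (⊤, ⊤)) : El O) ∈ WW (ι q) 0 :=
      fun q => ⟨trivial, rfl, rfl⟩
    have hinj : ∀ q q', ExistsInjCont (sub G (S q)) (sub G (S q')) → le q q' := by
      rintro q q' ⟨f, hf, hfi⟩
      obtain ⟨φ, hm, hemb, -⟩ := emb_of_inj (hS q') f hf hfi
      obtain ⟨m, -, hmW⟩ := struct hl (hιtop q) (n := 0) (φ := φ)
        (fun e he e' he' k => hemb e (hW q he) e' (hW q he') k)
      obtain ⟨-, p, hp, hp', -⟩ := hm (hW q (hne q))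
      have := (hmW _ (hne q)).2.1
      rw [hp'] at this
      rw [← hι this]
      exact hp
    refine ⟨fun q => sub G (S q), fun q => isClopen_sub (hS q), ?_, ?_, ?_⟩
    · intro q q' hqq'
      refine ⟨fun h => ?_⟩
      obtain ⟨φ, hm, hemb, hφ⟩ := emb_of_inj (hS q') h h.continuous h.injective
      obtain ⟨ψ, hm', hemb', hψ⟩ := emb_of_inj (hS q) h.symm h.symm.continuous h.symm.injective
      obtain ⟨m, -, hmW⟩ := struct hl (hιtop q) (n := 0) (φ := φ)
        (fun e he e' he' k => hemb e (hW q he) e' (hW q he') k)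
      set e0 : El O := (ι q, 0, Sum.inl (⊤, ⊤)) with he0
      have h0S : e0 ∈ S q := hW q (hne q)
      obtain ⟨hg, p, hp, hp', hp''⟩ := hm h0S
      have hpq : p = q := by
        have := (hmW _ (hne q)).2.1
        rw [hp'] at this
        exact hι this
      subst hpq
      have hm1 : 1 ≤ m := by
        have := (hmW _ (hne p)).2.2
        rw [← this]
        exact hp''.resolve_right hqq'
      have hWm : WW (ι p) m ⊆ S q' := by
        rintro e ⟨h1, h2, h3⟩
        exact ⟨h1, p, hp, h2, Or.inl (h3 ▸ hm1)⟩
      obtain ⟨m', hmm', hmW'⟩ := struct hl (hιtop p) (n := m) (φ := ψ)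
        (fun e he e' he' k => hemb' e (hWm he) e' (hWm he') k)
      have hcomp : ψ (φ e0) = e0 := by
        obtain ⟨b, hb⟩ := aa_surj 0
        have h1 := hφ e0 h0S b
        have h2 := hψ (φ e0) (hm h0S) b
        have h3 : (⟨pt G (φ e0) b, φ e0, hm h0S, b, rfl⟩ : sub G (S q')) =
            h ⟨pt G e0 b, e0, h0S, b, rfl⟩ := Subtype.ext h1.symm
        change ((h.symm ⟨pt G (φ e0) b, φ e0, hm h0S, b, rfl⟩ : sub G (S p)) : Sp G) =
          pt G (ψ (φ e0)) b at h2
        rw [h3, Homeomorph.symm_apply_apply] at h2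
        have := (pt_eq.1 h2).2
        change vv l (aa b) _ = vv l (aa b) _ at this
        rw [hb] at this
        exact (vv_inj l this).symm
      have h4 := (hmW' _ (hmW _ (hne p))).2.2
      rw [← he0, hcomp] at h4
      have h5 : 0 = m' := h4
      omega
    · intro q q'
      constructor
      · intro h
        refine closedEmb_of_emb sh ?_ ?_
        · intro e he e' he' k
          exact vv_sh l k he.1 he'.1
        · rintro e ⟨h1, p, h2, h3, -⟩
          exact ⟨good_sh h1, p, htrans _ _ _ h2 h, h3, Or.inl (Nat.le_add_left _ _)⟩
      · rintro ⟨t, -, ⟨g⟩⟩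
        refine hinj q q' ⟨fun y => (g y).1, continuous_subtype_val.comp g.continuous, ?_⟩
        exact Subtype.val_injective.comp g.injective
    · intro q q' h h'
      exact h (hinj q q' h')

end QRep

theorem statement4 (α : Cardinal.{u}) (hα : Cardinal.continuum ≤ α) :
    ∃ (X : Type u) (tX : TopologicalSpace X),
      @TopologicalSpace.MetrizableSpace X tX ∧ #X = α ∧
      @RepresentsByClosedEmb α X tX := by
  exact QRep.main α hα
end

section
/- For every cardinal number α ≥ 𝔠, there exists a metrizable topological space X with |X| = α such that every quasiordered set (Q, ≤) with |Q| ≤ α has a representation by clopen subspaces of X with respect to injective continuous maps; that is, there is a family {X(q) : q ∈ Q} of pairwise non-homeomorphic clopen subsets of X such that q ≤ q' if and only if there exists an injective continuous map from X(q) into X(q'). -/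
universe u

open Cardinal

/-- The representation property of the space `X` for a quasiorder, with respect to
injective continuous maps. -/
def RepresentsByInjCont (α : Cardinal.{u}) (X : Type u) [TopologicalSpace X] : Prop :=
  ∀ (Q : Type u) (le : Q → Q → Prop), #Q ≤ α →
    (∀ q, le q q) → (∀ a b c, le a b → le b c → le a c) →
    ∃ Xq : Q → Set X,
      (∀ q, IsClopen (Xq q)) ∧
      (∀ q q', q ≠ q' → IsEmpty ((Xq q) ≃ₜ (Xq q'))) ∧
      (∀ q q', le q q' ↔ ExistsInjCont (Xq q) (Xq q'))

section helpers

open Set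

theorem bern {T P : Type} (W : T → Set (P×P)) (hT : #T ≤ 𝔠)
  (hW : ∀ t (F:Set P), #F < 𝔠 → ∃ z∈W t, z.1∉F ∧ z.2∉F ∧ z.1≠z.2) :
  ∃ K:Set P, ∀ t, ∃ z∈W t, z.1∈K ∧ z.2∉K := by
  classical
  obtain ⟨r,wo,hr⟩ := Cardinal.exists_ord_eq T
  rcases isEmpty_or_nonempty T with hE | ⟨⟨t0⟩⟩
  · exact ⟨∅, fun t => hE.elim t⟩
  obtain ⟨z0, -⟩ := hW t0 ∅ (by simpa using (Cardinal.aleph0_pos.trans_le Cardinal.aleph0_le_continuum))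
  have : Inhabited (P × P) := ⟨z0⟩
  choose! nx hnx using hW
  let g : T → P × P := wo.wf.fix (fun t ih => nx t
    (Set.range (fun p : {s // r s t} × Bool => if p.2 then (ih p.1.1 p.1.2).1 else (ih p.1.1 p.1.2).2)))
  let Fs : T → Set P := fun t => Set.range (fun p : {s // r s t} × Bool => if p.2 then (g p.1.1).1 else (g p.1.1).2)
  have hg : ∀ t, g t = nx t (Fs t) := fun t => wo.wf.fix_eq _ t
  have hF : ∀ t, #(Fs t) < 𝔠 := by
    intro t
    refine Cardinal.mk_range_le.trans_lt ?_
    have h1 : #{s // r s t} < #T := Cardinal.card_typein_lt t hr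
    simp only [Cardinal.mk_prod, Cardinal.lift_id]
    refine Cardinal.mul_lt_of_lt Cardinal.aleph0_le_continuum (h1.trans_le hT) ?_
    exact (Cardinal.mk_lt_aleph0).trans_le Cardinal.aleph0_le_continuum
  have hgt : ∀ t, g t ∈ W t ∧ (g t).1 ∉ Fs t ∧ (g t).2 ∉ Fs t ∧ (g t).1 ≠ (g t).2 := by
    intro t
    rw [hg t]
    exact hnx t _ (hF t)
  refine ⟨Set.range fun t => (g t).1, fun t => ⟨g t, (hgt t).1, ⟨t, rfl⟩, ?_⟩⟩
  rintro ⟨s, hs⟩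
  simp only at hs
  rcases trichotomous_of r s t with h | h | h
  · exact (hgt t).2.2.1 ⟨(⟨s, h⟩, true), by simpa using hs⟩
  · subst h; exact (hgt s).2.2.2 hs
  · exact (hgt s).2.1 ⟨(⟨t, h⟩, false), by simpa using hs.symm⟩

theorem ladder_rigid {V : Type*} [LinearOrder V] [WellFoundedLT V] [OrderTop V]
  (s : V → ℕ → V) (C : V → Prop) 
  (hs : ∀ v, C v → IsLUB (range (s v)) v ∧ StrictMono (s v))
  (hC : ∀ v (a : ℕ → V), StrictMono a → IsLUB (range a) v → C v)
  (f : V → V) (hf : StrictMono f) (hfC : ∀ v, C v → C (f v) ∧ ∀ n, s (f v) n = f (s v n)) (x : V) :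
  f x = x := by
  by_contra hne
  have hle : ∀ y, y ≤ f y := fun y => hf.le_apply
  have hlt : x < f x := lt_of_le_of_ne (hle x) (Ne.symm hne)
  let a : ℕ → V := fun k => f^[k] x
  have hasucc : ∀ k, a (k+1) = f (a k) := fun k => Function.iterate_succ_apply' f k x
  have ha : StrictMono a := by
    refine strictMono_nat_of_lt_succ fun k => ?_
    induction k with
    | zero => exact hlt
    | succ k ih => rw [hasucc, hasucc (k+1)]; exact hf ih
  obtain ⟨v, hv⟩ : ∃ v, IsLUB (range a) v := by
    have hn : (upperBounds (range a)).Nonempty := ⟨⊤, fun _ _ => le_top⟩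
    exact ⟨wellFounded_lt.min _ hn, wellFounded_lt.min_mem _ hn, fun y hy => wellFounded_lt.min_le hy⟩
  have hav : ∀ k, a k < v := fun k => (ha (Nat.lt_succ_self k)).trans_le (hv.1 ⟨_, rfl⟩)
  have hCv := hC v a ha hv
  have hsv : ∀ n, s v n < v := fun n => ((hs v hCv).2 (Nat.lt_succ_self n)).trans_le ((hs v hCv).1.1 ⟨_, rfl⟩)
  obtain ⟨hCf, hsf⟩ := hfC v hCv
  have hfv : f v = v := by
    refine le_antisymm ((hs _ hCf).1.2 ?_) (hle v)
    rintro _ ⟨n, rfl⟩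
    rw [hsf]
    obtain ⟨_, ⟨k, rfl⟩, hk⟩ := (lt_isLUB_iff hv).1 (hsv n)
    exact ((hf hk).trans_eq (hasucc k).symm).le.trans (hav _).le
  obtain ⟨_, ⟨n, rfl⟩, hn⟩ := (lt_isLUB_iff (hs v hCv).1).1 (hav 0)
  have hfix : f (s v n) = s v n := by rw [← hsf, hfv]
  have : ∀ k, a k < s v n := by
    intro k
    induction k with
    | zero => exact hn
    | succ k ih => rw [hasucc, ← hfix]; exact hf ih
  have h2 : v ≤ s v n := hv.2 (by rintro _ ⟨k, rfl⟩; exact (this k).le)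
  exact absurd (hsv n) (not_lt.2 h2)

theorem avoid {P : Type} (S : Set P) (p : P → P) (hp : InjOn p S) (hS : 𝔠 ≤ #S) (F : Set P) (hF : #F < 𝔠) :
    ∃ x ∈ S, x ∉ F ∧ p x ∉ F := by
  by_contra hcon
  push Not at hcon
  have hsub : S ⊆ F ∪ (S ∩ p ⁻¹' F) := by
    intro x hx
    by_cases h : x ∈ F
    · exact Or.inl h
    · exact Or.inr ⟨hx, hcon x hx h⟩
  have h2 : #(S ∩ p ⁻¹' F : Set P) ≤ #F := by
    refine Cardinal.mk_le_of_injective (f := fun x : (S ∩ p ⁻¹' F : Set P) => (⟨p x.1, x.2.2⟩ : F)) ?_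
    rintro ⟨x, hx⟩ ⟨y, hy⟩ h
    exact Subtype.ext (hp hx.1 hy.1 (congrArg Subtype.val h))
  have h3 : #S < 𝔠 := (Cardinal.mk_le_mk_of_subset hsub).trans_lt
    ((Cardinal.mk_union_le _ _).trans_lt
      (Cardinal.add_lt_of_lt Cardinal.aleph0_le_continuum hF (h2.trans_lt hF)))
  exact absurd h3 (not_lt.2 hS)

/-- the special points -/
def zp (n : ℕ) : ℝ × ℝ := ((n : ℝ), 0)

theorem union_zp_lt (F : Set (ℝ × ℝ)) (hF : #F < 𝔠) : #(F ∪ range zp : Set (ℝ × ℝ)) < 𝔠 := by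
  refine (Cardinal.mk_union_le _ _).trans_lt (Cardinal.add_lt_of_lt Cardinal.aleph0_le_continuum hF ?_)
  exact ((countable_range zp).le_aleph0).trans_lt Cardinal.aleph0_lt_continuum

/-- tasks -/
def Wt (t : (ℕ → (ℝ×ℝ)×(ℝ×ℝ))×(ℝ×ℝ)×ℝ) : Set ((ℝ×ℝ)×(ℝ×ℝ)) :=
  {z | t.2.2 * dist z.1 t.2.1 < 1 ∧ z.1 ≠ z.2 ∧ z ∈ closure (range t.1) ∧
    (∀ y, (z.1, y) ∈ closure (range t.1) → y = z.2) ∧ z.1 ∉ range zp ∧ z.2 ∉ range zp}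

theorem exists_K0 : ∃ K : Set (ℝ × ℝ), (∀ n, zp n ∈ K) ∧
    ∀ (t : (ℕ → (ℝ×ℝ)×(ℝ×ℝ))×(ℝ×ℝ)×ℝ) (S : Set (ℝ × ℝ)) (p : ℝ × ℝ → ℝ × ℝ),
      𝔠 ≤ #S → InjOn p S → (∀ x ∈ S, p x ≠ x) → (∀ x ∈ S, t.2.2 * dist x t.2.1 < 1) →
      (∀ x ∈ S, (x, p x) ∈ closure (range t.1)) →
      (∀ x ∈ S, ∀ y, (x, y) ∈ closure (range t.1) → y = p x) →
      ∃ x y, x ∈ K ∧ x ∉ range zp ∧ y ∉ K ∧ t.2.2 * dist x t.2.1 < 1 ∧ (x, y) ∈ closure (range t.1) ∧ 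
        (∀ y', (x, y') ∈ closure (range t.1) → y' = y) := by
  let T := {t : (ℕ → (ℝ×ℝ)×(ℝ×ℝ))×(ℝ×ℝ)×ℝ // ∀ F : Set (ℝ×ℝ), #F < 𝔠 → ∃ z ∈ Wt t, z.1 ∉ F ∧ z.2 ∉ F}
  have hT : #T ≤ 𝔠 := by
    refine (Cardinal.mk_subtype_le _).trans ?_
    simp [Cardinal.mk_real]
  obtain ⟨K, hK⟩ := bern (fun t : T => Wt t.1) hT (by
    intro t F hF
    obtain ⟨z, hz, h⟩ := t.2 F hF
    exact ⟨z, hz, h.1, h.2, hz.2.1⟩)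
  refine ⟨K ∪ range zp, fun n => Or.inr ⟨n, rfl⟩, ?_⟩
  intro t S p hS hp hne hd hcl hu
  obtain ⟨⟨x, y⟩, hz, h1, h2⟩ := hK ⟨t, by
    intro F hF
    obtain ⟨x, hx, hx1, hx2⟩ := avoid S p hp hS _ (union_zp_lt F hF)
    simp only [mem_union, not_or] at hx1 hx2
    exact ⟨(x, p x), ⟨hd x hx, (hne x hx).symm, hcl x hx, hu x hx, hx1.2, hx2.2⟩, hx1.1, hx2.1⟩⟩
  obtain ⟨g1, g2, g3, g4, g5, g6⟩ := hz
  exact ⟨x, y, Or.inl h1, g5, fun h => h.elim h2 g6, g1, g3, g4⟩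

theorem continuum_le_of_closed {C : Set (ℝ × ℝ)} (hC : IsClosed C) (h : ¬ C.Countable) : 𝔠 ≤ #C := by
  obtain ⟨f, hf, -, hinj⟩ := hC.exists_nat_bool_injection_of_not_countable h
  have : #(ℕ → Bool) ≤ #C := Cardinal.mk_le_of_injective (f := fun x => (⟨f x, hf ⟨x, rfl⟩⟩ : C))
    (fun x y h => hinj (congrArg Subtype.val h))
  simpa using this

theorem continuum_ball {K : Set (ℝ × ℝ)}
    (H1 : ∀ C, IsClosed C → ¬ C.Countable → ∃ x ∈ C, x ∈ K ∧ x ∉ range zp) (x0 : ℝ × ℝ) (r : ℝ) (hr : 0 < r) :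
    𝔠 ≤ #(((K \ range zp) ∩ Metric.ball x0 r : Set (ℝ × ℝ))) := by
  have key : ∀ t : Ioo (x0.1 - r) (x0.1 + r), ∃ y, ((t : ℝ), y) ∈ (K \ range zp) ∩ Metric.ball x0 r := by
    rintro ⟨t, ht⟩
    obtain ⟨⟨a, b⟩, hx, hK, hz⟩ := H1 ({t} ×ˢ Icc (x0.2 - r/2) (x0.2 + r/2))
      (isClosed_singleton.prod isClosed_Icc) (by
        intro hc
        have h2 := (hc.image Prod.snd)
        rw [Set.snd_image_prod (singleton_nonempty t)] at h2
        have := (Cardinal.Real.Icc_countable_iff).1 h2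
        linarith)
    simp only [mem_prod, mem_singleton_iff, mem_Icc] at hx
    obtain ⟨rfl, hb1, hb2⟩ := hx
    refine ⟨b, ⟨hK, hz⟩, ?_⟩
    rw [Metric.mem_ball, Prod.dist_eq, max_lt_iff, Real.dist_eq, Real.dist_eq, abs_lt, abs_lt]
    simp only [mem_Ioo] at ht
    refine ⟨⟨?_, ?_⟩, ?_, ?_⟩ <;> simp only <;> linarith
  choose y hy using key
  have : #(Ioo (x0.1 - r) (x0.1 + r)) ≤ #(((K \ range zp) ∩ Metric.ball x0 r : Set (ℝ × ℝ))) :=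
    Cardinal.mk_le_of_injective (f := fun t => ⟨_, hy t⟩) (by
      intro s t h
      have := congrArg (fun z => z.1.1) h
      exact Subtype.ext this)
  rwa [Cardinal.mk_Ioo_real (by linarith)] at this

theorem exists_K : ∃ K : Set (ℝ × ℝ), (∀ n, zp n ∈ K) ∧
    (∀ C, IsClosed C → ¬ C.Countable → ∃ x ∈ C, x ∈ K ∧ x ∉ range zp) ∧
    (∀ x0 ∈ K, ∀ r > 0, ∀ p : ℝ × ℝ → ℝ × ℝ, ContinuousOn p (K ∩ Metric.ball x0 r) →
      InjOn p (K ∩ Metric.ball x0 r) → MapsTo p (K ∩ Metric.ball x0 r) K →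
      ∃ x ∈ K ∩ Metric.ball x0 r, p x = x) := by
  obtain ⟨K, hz, hK⟩ := exists_K0
  have H1 : ∀ C, IsClosed C → ¬ C.Countable → ∃ x ∈ C, x ∈ K ∧ x ∉ range zp := by
    intro C hC hcount
    have hne : Nonempty C := by
      by_contra h
      rw [not_nonempty_iff, isEmpty_coe_sort] at h
      exact hcount (h ▸ countable_empty)
    obtain ⟨u, hu⟩ := TopologicalSpace.exists_dense_seq C
    let v : ℝ × ℝ := (1, 0)
    let m : C → (ℝ × ℝ) × (ℝ × ℝ) := fun x => (x.1, x.1 + v)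
    have hm : Continuous m := by fun_prop
    have hsub : closure (range (m ∘ u)) ⊆ {z | z.1 ∈ C ∧ z.2 = z.1 + v} := by
      refine closure_minimal ?_ ?_
      · rintro _ ⟨n, rfl⟩
        exact ⟨(u n).2, rfl⟩
      · exact (hC.preimage continuous_fst).inter (isClosed_eq (by fun_prop) (by fun_prop))
    obtain ⟨x, y, hx1, hx2, -, -, hx3, -⟩ := hK (m ∘ u, 0, 0) C (fun x => x + v) (continuum_le_of_closed hC hcount)
      (fun x _ y _ h => add_right_cancel h) (by
        intro x hx h
        have := congrArg Prod.fst h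
        simp [v] at this) (by simp) (by
        intro x hx
        exact hm.range_subset_closure_image_dense hu ⟨⟨x, hx⟩, rfl⟩ |> fun h => by
          rwa [← range_comp] at h) (by
        intro x hx y hy
        exact (hsub hy).2)
    exact ⟨x, (hsub hx3).1, hx1, hx2⟩
  refine ⟨K, hz, H1, ?_⟩
  intro x0 hx0 r hr p hpc hpi hpm
  by_contra hcon
  push Not at hcon
  set S := K ∩ Metric.ball x0 r with hS
  have : Nonempty S := ⟨⟨x0, hx0, Metric.mem_ball_self hr⟩⟩
  obtain ⟨u, hu⟩ := TopologicalSpace.exists_dense_seq S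
  let m : S → (ℝ × ℝ) × (ℝ × ℝ) := fun x => (x.1, p x.1)
  have hpr : Continuous fun x : S => p x.1 := continuousOn_iff_continuous_domRestrict.1 hpc
  have hm : Continuous m := continuous_subtype_val.prodMk hpr
  have hball : ∀ x, r⁻¹ * dist x x0 < 1 ↔ x ∈ Metric.ball x0 r := by
    intro x
    rw [Metric.mem_ball, inv_mul_lt_iff₀ hr, mul_one]
  have huniq : ∀ x ∈ S, ∀ y, (x, y) ∈ closure (range (m ∘ u)) → y = p x := by
    intro x hx y hy
    obtain ⟨a, ha, hlim⟩ := mem_closure_iff_seq_limit.1 hy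
    choose b hb using ha
    have h1 : Filter.Tendsto (fun n => (a n).1) Filter.atTop (nhds x) := (continuous_fst.tendsto _).comp hlim
    have h2 : Filter.Tendsto (fun n => (a n).2) Filter.atTop (nhds y) := (continuous_snd.tendsto _).comp hlim
    have h3 : Filter.Tendsto (fun n => u (b n)) Filter.atTop (nhds (⟨x, hx⟩ : S)) := by
      rw [tendsto_subtype_rng]
      refine h1.congr fun n => ?_
      rw [← hb n]; rfl
    have h4 := (hpr.tendsto ⟨x, hx⟩).comp h3
    refine tendsto_nhds_unique h2 (h4.congr fun n => ?_)
    rw [← hb n]; rfl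
  obtain ⟨x, y, hx1, -, hx2, hx3, hx4, hx5⟩ := hK (m ∘ u, x0, r⁻¹) S p
    ((continuum_ball H1 x0 r hr).trans (Cardinal.mk_le_mk_of_subset (inter_subset_inter_left _ sdiff_subset)))
    hpi hcon (fun x hx => (hball x).2 hx.2) (by
      intro x hx
      have h := hm.range_subset_closure_image_dense hu ⟨⟨x, hx⟩, rfl⟩
      rwa [← range_comp] at h) huniq
  have hxS : x ∈ S := ⟨hx1, (hball x).1 hx3⟩
  rw [huniq x hxS y hx4] at hx2
  exact hx2 (hpm hxS)

theorem K0_conn {K : Set (ℝ × ℝ)}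
    (H1 : ∀ C, IsClosed C → ¬ C.Countable → ∃ x ∈ C, x ∈ K ∧ x ∉ range zp) : IsPreconnected (K \ range zp) := by
  intro U V hU hV hcov ⟨a, ha, haU⟩ ⟨b, hb, hbV⟩
  by_contra hcon
  rw [not_nonempty_iff_eq_empty] at hcon
  have hUV : U ∩ V = ∅ := by
    by_contra h
    obtain ⟨x, hx⟩ := nonempty_iff_ne_empty.2 h
    obtain ⟨r, hr, hsub⟩ := Metric.isOpen_iff.1 (hU.inter hV) x hx
    have h1 := continuum_ball H1 x r hr
    have : ((K \ range zp) ∩ Metric.ball x r : Set (ℝ × ℝ)) = ∅ := 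
      subset_empty_iff.1 (hcon ▸ inter_subset_inter_right _ hsub)
    rw [this] at h1
    exact Cardinal.continuum_ne_zero (by simpa using h1)
  have hC : (U ∪ V)ᶜ.Countable := by
    by_contra h
    obtain ⟨x, hx, hxK, hxz⟩ := H1 _ (hU.union hV).isClosed_compl h
    exact hx (hcov ⟨hxK, hxz⟩)
  have hconn := (hC.isPathConnected_compl_of_one_lt_rank (by
    rw [rank_prod', Module.rank_self, one_add_one_eq_two]; exact Cardinal.one_lt_two)).isConnected.isPreconnected
  rw [compl_compl] at hconn
  obtain ⟨x, -, hx⟩ := hconn U V hU hV subset_rfl ⟨a, Or.inl haU, haU⟩ ⟨b, Or.inr hbV, hbV⟩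
  rw [hUV] at hx
  exact hx

section space

variable {E C : Type u} (c : ℕ → E → C)

/-- weight vanishing exactly at special points -/
noncomputable def uw (k : ℝ × ℝ) : ℝ := min 1 (Metric.infDist k (range zp))

/-- bump at the n-th special point -/
noncomputable def bw (n : ℕ) (k : ℝ × ℝ) : ℝ := max 0 (1 - dist k (zp n))

theorem dist_zp {m n : ℕ} (h : m ≠ n) : 1 ≤ dist (zp m) (zp n) := by
  rw [Prod.dist_eq]
  refine le_max_of_le_left ?_
  simp only [zp]
  rw [Nat.dist_cast_real]
  exact Nat.pairwise_one_le_dist h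

theorem zp_inj {m n : ℕ} (h : zp m = zp n) : m = n := by
  by_contra hne
  have := dist_zp hne
  rw [h, dist_self] at this
  linarith

theorem isClosed_zp : IsClosed (range zp) := by
  have : Topology.IsClosedEmbedding zp := by
    refine Metric.isClosedEmbedding_of_pairwise_le_dist one_pos ?_
    intro m n h
    exact dist_zp h
  exact this.isClosed_range

theorem uw_nonneg (k) : 0 ≤ uw k := le_min zero_le_one Metric.infDist_nonneg
theorem uw_le (k) : uw k ≤ 1 := min_le_left _ _
theorem bw_nonneg (n k) : 0 ≤ bw n k := le_max_left _ _
theorem bw_le (n k) : bw n k ≤ 1 := max_le zero_le_one (by linarith [dist_nonneg (x := k) (y := zp n)])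

theorem uw_pos {k} (h : k ∉ range zp) : 0 < uw k := by
  refine lt_min one_pos ?_
  exact (isClosed_zp.notMem_iff_infDist_pos (range_nonempty _)).1 h

theorem uw_zp (n) : uw (zp n) = 0 := by
  unfold uw
  rw [Metric.infDist_zero_of_mem (mem_range_self n)]
  simp

theorem bw_self (n) : bw n (zp n) = 1 := by simp [bw]

theorem bw_ne {m n} (h : m ≠ n) : bw n (zp m) = 0 := by
  have := dist_zp h
  exact max_eq_left (by linarith)

theorem uw_lip (k k') : |uw k - uw k'| ≤ dist k k' := by
  have h1 := Metric.infDist_le_infDist_add_dist (s := range zp) (x := k) (y := k')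
  have h2 := Metric.infDist_le_infDist_add_dist (s := range zp) (x := k') (y := k)
  rw [dist_comm k' k] at h2
  have := abs_min_sub_min_le_max 1 (Metric.infDist k (range zp)) 1 (Metric.infDist k' (range zp))
  refine this.trans (max_le ?_ ?_)
  · simp
  · rw [abs_le]; constructor <;> linarith

theorem bw_lip (n k k') : |bw n k - bw n k'| ≤ dist k k' := by
  have h1 := dist_triangle k k' (zp n)
  have h2 := dist_triangle k' k (zp n)
  rw [dist_comm k' k] at h2
  have := abs_max_sub_max_le_max 0 (1 - dist k (zp n)) 0 (1 - dist k' (zp n))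
  refine this.trans (max_le ?_ ?_)
  · simp
  · rw [abs_le]; constructor <;> linarith

/-- a type synonym with the discrete topology, used as index set -/
def Idx (E C : Type u) : Type u := E ⊕ (ℕ × C)

instance : TopologicalSpace (Idx E C) := ⊥
instance : DiscreteTopology (Idx E C) := ⟨rfl⟩

/-- ambient metric space -/
abbrev Amb (E C : Type u) : Type u := (ℝ × ℝ) × BoundedContinuousFunction (Idx E C) ℝ

open Classical in
/-- coordinates -/
noncomputable def phiFun (k : ℝ × ℝ) (e : E) : Idx E C → ℝ
  | Sum.inl e' => if e = e' then uw k else 0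
  | Sum.inr (n, g) => if c n e = g then bw n k else 0

theorem phiFun_nonneg (k : ℝ × ℝ) (e : E) (i) : 0 ≤ phiFun c k e i := by
  rcases i with e' | ⟨n, g⟩ <;> simp only [phiFun] <;> split_ifs <;>
    first | exact le_rfl | exact uw_nonneg _ | exact bw_nonneg _ _

theorem phiFun_le (k : ℝ × ℝ) (e : E) (i) : phiFun c k e i ≤ 1 := by
  rcases i with e' | ⟨n, g⟩ <;> simp only [phiFun] <;> split_ifs <;>
    first | exact zero_le_one | exact uw_le _ | exact bw_le _ _

/-- the parametrization -/
noncomputable def Phi (k : ℝ × ℝ) (e : E) : Amb E C :=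
  (k, BoundedContinuousFunction.ofNormedAddCommGroupDiscrete (phiFun c k e) 1 (fun i => by
    rw [Real.norm_eq_abs, abs_of_nonneg (phiFun_nonneg c k e i)]
    exact phiFun_le c k e i))

theorem Phi_fst (k : ℝ × ℝ) (e : E) : (Phi c k e).1 = k := rfl
open Classical in
theorem Phi_inl (k : ℝ × ℝ) (e e' : E) : (Phi c k e).2 (Sum.inl e' : Idx E C) = if e = e' then uw k else 0 := rfl
open Classical in
theorem Phi_inr (k : ℝ × ℝ) (e : E) (n g) :
    (Phi c k e).2 (Sum.inr (n, g) : Idx E C) = if c n e = g then bw n k else 0 := rfl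

theorem Phi_cont (e : E) : Continuous fun k => Phi c k e := by
  refine continuous_id.prodMk ?_
  refine LipschitzWith.continuous (K := 1) (LipschitzWith.of_dist_le_mul fun k k' => ?_)
  rw [NNReal.coe_one, one_mul, BoundedContinuousFunction.dist_le dist_nonneg]
  intro i
  change |phiFun c k e i - phiFun c k' e i| ≤ _
  rcases i with e' | ⟨n, g⟩ <;> simp only [phiFun] <;> split_ifs
  · exact uw_lip _ _
  · simp
  · exact bw_lip _ _ _
  · simp

theorem Phi_coord_cont (i : Idx E C) : Continuous fun x : Amb E C => x.2 i := by
  fun_prop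

theorem Phi_zp {n : ℕ} {e e' : E} (h : c n e = c n e') : Phi c (zp n) e = Phi c (zp n) e' := by
  refine Prod.ext rfl (BoundedContinuousFunction.ext ?_)
  rintro (e'' | ⟨m, g⟩)
  · rw [Phi_inl, Phi_inl]
    simp [uw_zp]
  · rw [Phi_inr, Phi_inr]
    by_cases hm : n = m
    · subst hm; rw [h]
    · simp [bw_ne hm]

theorem Phi_inj {k k' : ℝ × ℝ} {e e' : E} (h : Phi c k e = Phi c k' e') :
    k = k' ∧ (e = e' ∨ ∃ n, k = zp n ∧ c n e = c n e') := by
  have hk : k = k' := congrArg Prod.fst h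
  subst hk
  refine ⟨rfl, ?_⟩
  by_cases hz : k ∈ range zp
  · obtain ⟨n, rfl⟩ := hz
    refine Or.inr ⟨n, rfl, ?_⟩
    have h1 := congrArg (fun x => x.2 (Sum.inr (n, c n e) : Idx E C)) h
    simp only [Phi_inr, bw_self] at h1
    by_contra hne
    simp [Ne.symm hne] at h1
  · have h1 := congrArg (fun x => x.2 (Sum.inl e : Idx E C)) h
    simp only [Phi_inl] at h1
    have := uw_pos hz
    left
    by_contra hne
    simp [Ne.symm hne] at h1
    linarith

theorem Phi_tau (τ : E → E) (hτ : Function.Injective τ)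
    (hc : ∀ n e e', c n (τ e) = c n (τ e') ↔ c n e = c n e') (k k' : ℝ × ℝ) (e e' : E) :
    dist (Phi c k (τ e)) (Phi c k' (τ e')) ≤ dist (Phi c k e) (Phi c k' e') := by
  rw [Prod.dist_eq]
  refine max_le (le_max_left _ _) (le_max_of_le_right ?_)
  rw [BoundedContinuousFunction.dist_le dist_nonneg]
  have key : ∀ i, |phiFun c k e i - phiFun c k' e' i| ≤ dist (Phi c k e).2 (Phi c k' e').2 := fun i =>
    BoundedContinuousFunction.dist_coe_le_dist (f := (Phi c k e).2) (g := (Phi c k' e').2) i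
  have h0 : 0 ≤ dist (Phi c k e).2 (Phi c k' e').2 := dist_nonneg
  intro i
  change |phiFun c k (τ e) i - phiFun c k' (τ e') i| ≤ _
  rcases i with e'' | ⟨n, g⟩
  · by_cases h1 : ∃ e0, τ e0 = e''
    · obtain ⟨e0, rfl⟩ := h1
      have := key (Sum.inl e0)
      have a1 : ∀ k e, phiFun c k (τ e) (Sum.inl (τ e0)) = phiFun c k e (Sum.inl e0) := fun k e =>
        by classical exact if_congr hτ.eq_iff rfl rfl
      rw [a1, a1]
      exact this
    · push Not at h1
      simp only [phiFun, h1, if_false, sub_zero, abs_zero]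
      exact h0
  · by_cases h1 : ∃ e0, c n (τ e0) = g
    · obtain ⟨e0, rfl⟩ := h1
      have := key (Sum.inr (n, c n e0))
      have a1 : ∀ k e, phiFun c k (τ e) (Sum.inr (n, c n (τ e0))) = phiFun c k e (Sum.inr (n, c n e0)) :=
        fun k e => by classical exact if_congr (hc n e e0) rfl rfl
      rw [a1, a1]
      exact this
    · push Not at h1
      simp only [phiFun, h1, if_false, sub_zero, abs_zero]
      exact h0

/-- the subspace associated with a set of edges -/
def Sp (K : Set (ℝ × ℝ)) (A : Set E) : Set (Amb E C) := {x | ∃ k ∈ K, ∃ e ∈ A, x = Phi c k e}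

theorem Sp_open (K : Set (ℝ × ℝ)) (A A0 : Set E)
    (hsat : ∀ n, ∀ e ∈ A, ∀ e' ∈ A0, c n e = c n e' → e' ∈ A) :
    IsOpen {x : Sp c K A0 | x.1 ∈ Sp c K A} := by
  have : {x : Sp c K A0 | x.1 ∈ Sp c K A} = 
      ⋃ e ∈ A, ({x : Sp c K A0 | 0 < x.1.2 (Sum.inl e : Idx E C)} ∪
        ⋃ n, {x : Sp c K A0 | 0 < x.1.2 (Sum.inr (n, c n e) : Idx E C)}) := by
    ext ⟨x, hx⟩
    simp only [mem_ofPred_eq, mem_iUnion, mem_union, exists_prop]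
    constructor
    · rintro ⟨k, hk, e, he, rfl⟩
      refine ⟨e, he, ?_⟩
      by_cases hz : k ∈ range zp
      · obtain ⟨n, rfl⟩ := hz
        exact Or.inr ⟨n, by simp [Phi_inr, bw_self]⟩
      · left
        simp [Phi_inl, uw_pos hz]
    · obtain ⟨k, hk, e', he', rfl⟩ := hx
      rintro ⟨e, he, h | ⟨n, h⟩⟩
      · rw [Phi_inl] at h
        split_ifs at h with h1
        · exact ⟨k, hk, e', h1 ▸ he, rfl⟩
        · exact absurd h (lt_irrefl _)
      · rw [Phi_inr] at h
        split_ifs at h with h1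
        · exact ⟨k, hk, e', hsat n e he e' he' h1.symm, rfl⟩
        · exact absurd h (lt_irrefl _)
  rw [this]
  have hc : ∀ i : Idx E C, IsOpen {x : Sp c K A0 | 0 < x.1.2 i} := fun i =>
    isOpen_lt continuous_const ((Phi_coord_cont i).comp continuous_subtype_val)
  exact isOpen_biUnion fun e _ => (hc _).union (isOpen_iUnion fun n => hc _)

theorem Sp_clopen (K : Set (ℝ × ℝ)) (A A0 : Set E)
    (hsat : ∀ n, ∀ e ∈ A, ∀ e' ∈ A0, c n e = c n e' → e' ∈ A) :
    IsClopen {x : Sp c K A0 | x.1 ∈ Sp c K A} := by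
  refine ⟨⟨?_⟩, Sp_open c K A A0 hsat⟩
  convert Sp_open c K (A0 \ A) A0 ?_ using 1
  · ext ⟨x, hx⟩
    simp only [mem_compl_iff, mem_ofPred_eq]
    constructor
    · intro h
      obtain ⟨k, hk, e, he, rfl⟩ := hx
      exact ⟨k, hk, e, ⟨he, fun hA' => h ⟨k, hk, e, hA', rfl⟩⟩, rfl⟩
    · rintro ⟨k, hk, e, he, rfl⟩ ⟨k', hk', e', he', heq⟩
      obtain ⟨rfl, h | ⟨n, -, h⟩⟩ := Phi_inj c heq
      · exact he.2 (h ▸ he')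
      · exact he.2 (hsat n e' he' e he.1 h.symm)
  · intro n e he e' he' h
    exact ⟨he', fun h' => he.2 (hsat n e' h' e he.1 h.symm)⟩

theorem main_map {K : Set (ℝ × ℝ)}
    (H1 : ∀ C, IsClosed C → ¬ C.Countable → ∃ x ∈ C, x ∈ K ∧ x ∉ range zp)
    (H2 : ∀ x0 ∈ K, ∀ r > 0, ∀ p : ℝ × ℝ → ℝ × ℝ, ContinuousOn p (K ∩ Metric.ball x0 r) →
      InjOn p (K ∩ Metric.ball x0 r) → MapsTo p (K ∩ Metric.ball x0 r) K →
      ∃ x ∈ K ∩ Metric.ball x0 r, p x = x)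
    (B : Set E) (g : K → Amb E C) (hg : Continuous g) (hinj : Function.Injective g)
    (hB : ∀ k, g k ∈ Sp c K B) : ∃ e ∈ B, ∀ k : K, g k = Phi c k e := by
  classical
  have hgB : ∀ k, ∃ e ∈ B, g k = Phi c (g k).1 e ∧ (g k).1 ∈ K := by
    intro k
    obtain ⟨k', hk', e, he, h⟩ := hB k
    rw [h]
    exact ⟨e, he, rfl, hk'⟩
  have hO : ∀ i : Idx E C, IsOpen {k : K | 0 < (g k).2 i} := fun i =>
    isOpen_lt continuous_const ((Phi_coord_cont i).comp hg)
  have hOe : ∀ e k, 0 < (g k).2 (Sum.inl e : Idx E C) → g k = Phi c (g k).1 e := by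
    intro e k h
    obtain ⟨e', he', h', -⟩ := hgB k
    rw [h', Phi_inl] at h
    split_ifs at h with h1
    · rw [h1] at h'; exact h'
    · exact absurd h (lt_irrefl _)
  have hopen : ∀ W : Set K, IsOpen W → ∀ k ∈ W, ∃ r > 0, ∀ x (hx : x ∈ K), x ∈ Metric.ball k.1 r → (⟨x, hx⟩ : K) ∈ W := by
    intro W hW k hk
    obtain ⟨r, hr, h⟩ := Metric.isOpen_iff.1 hW k hk
    exact ⟨r, hr, fun x hx hxb => h hxb⟩
  have hpne : IsOpen {k : K | (g k).1 ≠ k.1} := isOpen_ne_fun (by fun_prop) (by fun_prop)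
  have step1 : ∀ k, (g k).1 ∉ range zp → (g k).1 = k.1 := by
    intro k hk
    by_contra hne
    obtain ⟨e, he, h, -⟩ := hgB k
    have hke : 0 < (g k).2 (Sum.inl e : Idx E C) := by
      rw [h, Phi_inl, if_pos rfl]; exact uw_pos hk
    obtain ⟨r, hr, hball⟩ := hopen _ ((hO (Sum.inl e)).inter hpne) k ⟨hke, hne⟩
    let p : ℝ × ℝ → ℝ × ℝ := fun x => if hx : x ∈ K then (g ⟨x, hx⟩).1 else x
    have hp : ∀ x (hx : x ∈ K), p x = (g ⟨x, hx⟩).1 := fun x hx => dif_pos hx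
    obtain ⟨x, ⟨hxK, hxb⟩, hx⟩ := H2 k.1 k.2 r hr p
      (by
        refine ContinuousOn.mono ?_ inter_subset_left
        rw [continuousOn_iff_continuous_domRestrict]
        have : K.domRestrict p = fun k => (g k).1 := by
          ext1 k; exact hp k.1 k.2
        rw [this]; fun_prop)
      (by
        intro x hx y hy hxy
        rw [hp x hx.1, hp y hy.1] at hxy
        have h1 := hOe e _ (hball x hx.1 hx.2).1
        have h2 := hOe e _ (hball y hy.1 hy.2).1
        rw [hxy] at h1
        exact congrArg Subtype.val (hinj (h1.trans h2.symm)))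
      (by
        intro x hx
        rw [hp x hx.1]
        obtain ⟨_, _, _, h⟩ := hgB ⟨x, hx.1⟩
        exact h)
    rw [hp x hxK] at hx
    exact (hball x hxK hxb).2 hx
  have hinf : ∀ (k : K) (r : ℝ), 0 < r → ((K \ range zp) ∩ Metric.ball k.1 r).Infinite := by
    intro k r hr
    have := continuum_ball H1 k.1 r hr
    rw [← infinite_coe_iff, Cardinal.infinite_iff]
    exact Cardinal.aleph0_le_continuum.trans this
  have step2 : ∀ k, (g k).1 = k.1 := by
    intro k
    by_contra hne
    have hkz : (g k).1 ∈ range zp := by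
      by_contra h; exact hne (step1 k h)
    obtain ⟨n, hn⟩ := hkz
    obtain ⟨e, he, h, -⟩ := hgB k
    obtain ⟨r, hr, hball⟩ := hopen _ ((hO (Sum.inr (n, c n e))).inter hpne) k ⟨by
      simp only [mem_ofPred_eq]
      rw [h, Phi_inr, if_pos rfl, ← hn, bw_self]; exact one_pos, hne⟩
    obtain ⟨x, ⟨⟨hxK, -⟩, hxb⟩, hxk⟩ := (hinf k r hr).exists_notMem_finite (finite_singleton k.1)
    obtain ⟨h1, h2⟩ := hball x hxK hxb
    have hz : (g ⟨x, hxK⟩).1 ∈ range zp := by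
      by_contra h; exact h2 (step1 _ h)
    obtain ⟨m, hm⟩ := hz
    obtain ⟨e', he', h', -⟩ := hgB ⟨x, hxK⟩
    simp only [mem_ofPred_eq] at h1
    rw [h', Phi_inr, ← hm] at h1
    split_ifs at h1 with hc
    · by_cases hmn : m = n
      · subst hmn
        rw [← hm] at h'
        rw [← hn] at h
        have : g ⟨x, hxK⟩ = g k := by
          rw [h', h]; exact Phi_zp c hc
        exact hxk (congrArg Subtype.val (hinj this))
      · rw [bw_ne hmn] at h1; exact lt_irrefl _ h1
    · exact lt_irrefl _ h1
  have hne : (K \ range zp).Nonempty := by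
    obtain ⟨x, -, hx⟩ := H1 univ isClosed_univ (by
      rw [countable_univ_iff]; exact not_countable)
    exact ⟨x, hx⟩
  obtain ⟨k1, hk1, hk1z⟩ := hne
  obtain ⟨e, he, hke, -⟩ := hgB ⟨k1, hk1⟩
  rw [step2] at hke
  simp only at hke
  have hpre : IsPreconnected {k : K | k.1 ∉ range zp} := by
    have h1 := K0_conn H1
    have h2 : (Subtype.val : K → ℝ × ℝ) '' {k : K | k.1 ∉ range zp} = K \ range zp := by
      ext x; simp [and_comm]
    rw [← h2] at h1
    exact Topology.IsInducing.subtypeVal.isPreconnected_image.1 h1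
  have step3 : ∀ k : K, k.1 ∉ range zp → 0 < (g k).2 (Sum.inl e : Idx E C) := by
    intro k hk
    by_contra hcon
    obtain ⟨x, hx, hx1, hx2⟩ := hpre {k : K | 0 < (g k).2 (Sum.inl e : Idx E C)}
      (⋃ e' ∈ {e' | e' ≠ e}, {k : K | 0 < (g k).2 (Sum.inl e' : Idx E C)}) (hO _)
      (isOpen_biUnion fun e' _ => hO _) (by
        intro k hk
        obtain ⟨e', he', hke', -⟩ := hgB k
        rw [step2] at hke'
        have hpos : 0 < (g k).2 (Sum.inl e' : Idx E C) := by
          rw [hke', Phi_inl, if_pos rfl]; exact uw_pos hk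
        by_cases hee : e' = e
        · left; rw [hee] at hpos; exact hpos
        · right; exact mem_biUnion (show e' ∈ {e' | e' ≠ e} from hee) hpos)
      ⟨⟨k1, hk1⟩, hk1z, by
        simp only [mem_ofPred_eq]
        rw [hke, Phi_inl, if_pos rfl]; exact uw_pos hk1z⟩
      ⟨k, hk, by
        obtain ⟨e', he', hke', -⟩ := hgB k
        rw [step2] at hke'
        have hpos : 0 < (g k).2 (Sum.inl e' : Idx E C) := by
          rw [hke', Phi_inl, if_pos rfl]; exact uw_pos hk
        by_cases hee : e' = e
        · rw [hee] at hpos; exact absurd hpos hcon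
        · exact mem_biUnion (show e' ∈ {e' | e' ≠ e} from hee) hpos⟩
    simp only [mem_iUnion, mem_ofPred_eq, exists_prop] at hx1 hx2
    obtain ⟨e', hee, hx2⟩ := hx2
    rw [hOe e x hx1, Phi_inl, if_neg (Ne.symm hee)] at hx2
    exact lt_irrefl _ hx2
  refine ⟨e, he, ?_⟩
  have hdense : Dense {k : K | k.1 ∉ range zp} := by
    intro k
    rw [Metric.mem_closure_iff]
    intro r hr
    obtain ⟨x, ⟨hxK, hxz⟩, hxb⟩ := (hinf k r hr).nonempty
    exact ⟨⟨x, hxK⟩, hxz, by rw [dist_comm]; exact hxb⟩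
  have hcont2 : Continuous fun k : K => Phi c k.1 e := (Phi_cont c e).comp continuous_subtype_val
  have := Continuous.ext_on hdense hg hcont2 (by
    intro k hk
    have := hOe e k (step3 k hk)
    rw [step2] at this
    exact this)
  exact fun k => congrFun this k

end space

section comb

variable {V : Type u}

/-- limits of countable increasing sequences -/
def IsCof [LinearOrder V] (v : V) : Prop := ∃ a : ℕ → V, StrictMono a ∧ IsLUB (range a) v

open Classical in
/-- a chosen ladder -/
noncomputable def lad [LinearOrder V] (v : V) : ℕ → V := if h : IsCof v then h.choose else fun _ => v

theorem lad_spec [LinearOrder V] {v : V} (h : IsCof v) : IsLUB (range (lad v)) v ∧ StrictMono (lad v) := by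
  unfold lad
  rw [dif_pos h]
  exact ⟨h.choose_spec.2, h.choose_spec.1⟩

/-- the relations with label -/
def LRel [LinearOrder V] (i : V) (m : ℕ) : ℕ → V → V → Prop
  | 0, x, y => x = y
  | 1, x, y => x < y
  | 2, x, y => x = y ∧ x = i
  | 3, x, y => x = y ∧ m ≠ 0
  | n + 4, x, y => IsCof y ∧ lad y n = x

/-- raw edges: copy, component index, label, source, target -/
abbrev Ed (V : Type u) : Type u := Bool × V × ℕ × ℕ × V × V

/-- gluing maps -/
def cl : ℕ → Ed V → Ed V
  | 0, (_, i, m, _, x, _) => (false, i, m, 0, x, x)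
  | 1, (_, i, m, _, _, y) => (false, i, m, 0, y, y)
  | n + 2, (b, i, m, l, x, y) => (if l = n then false else b, i, m, l, x, y)

/-- shift -/
def sh : Ed V → Ed V
  | (b, i, m, l, x, y) => (b, i, m + 1, l, x, y)

theorem sh_inj : Function.Injective (sh : Ed V → Ed V) := by
  rintro ⟨b, i, m, l, x, y⟩ ⟨b', i', m', l', x', y'⟩ h
  simpa [sh] using h

theorem cl_sh (n : ℕ) (e : Ed V) : cl n (sh e) = sh (cl n e) := by
  obtain ⟨b, i, m, l, x, y⟩ := e
  match n with
  | 0 => rfl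
  | 1 => rfl
  | n + 2 => rfl

theorem cl_idx (n : ℕ) (e : Ed V) : (cl n e).2.1 = e.2.1 ∧ (cl n e).2.2.1 = e.2.2.1 := by
  obtain ⟨b, i, m, l, x, y⟩ := e
  match n with
  | 0 => exact ⟨rfl, rfl⟩
  | 1 => exact ⟨rfl, rfl⟩
  | n + 2 => exact ⟨rfl, rfl⟩

/-- valid edges -/
def Valid [LinearOrder V] : Set (Ed V) := {e | LRel e.2.1 e.2.2.1 e.2.2.2.1 e.2.2.2.2.1 e.2.2.2.2.2}

theorem comb_main [LinearOrder V] [WellFoundedLT V] [OrderTop V] (A : Set (Ed V)) (φ : Ed V → Ed V)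
    (hφ : ∀ e ∈ A, φ e ∈ Valid (V := V)) (hinj : InjOn φ A)
    (hpres : ∀ n, ∀ e ∈ A, ∀ e' ∈ A, cl n e = cl n e' → cl n (φ e) = cl n (φ e'))
    (i : V) (m : ℕ) (hA : ∀ b l x y, LRel i m l x y → (b, i, m, l, x, y) ∈ A) :
    ∃ m', (m ≠ 0 → m' ≠ 0) ∧ ∀ b l x y, LRel i m l x y →
      (φ (b, i, m, l, x, y)).2.1 = i ∧ (φ (b, i, m, l, x, y)).2.2.1 = m' := by
  have hlab : ∀ b l x y, LRel i m l x y → (φ (b, i, m, l, x, y)).2.2.2.1 = l := by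
    intro b l x y h
    have h1 := hpres (l + 2) _ (hA b l x y h) _ (hA (!b) l x y h) (by simp [cl])
    have h2 : φ (b, i, m, l, x, y) ≠ φ (!b, i, m, l, x, y) := fun hh => by
      have := hinj (hA b l x y h) (hA (!b) l x y h) hh
      simp at this
    by_contra hne
    apply h2
    generalize φ (b, i, m, l, x, y) = e1 at *
    generalize φ (!b, i, m, l, x, y) = e2 at *
    obtain ⟨b1, i1, m1, l1, x1, y1⟩ := e1
    obtain ⟨b2, i2, m2, l2, x2, y2⟩ := e2
    simp only [cl, Prod.mk.injEq] at h1 hne ⊢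
    obtain ⟨h3, h4, h5, h6, h7, h8⟩ := h1
    rw [if_neg hne, if_neg (h6 ▸ hne)] at h3
    exact ⟨h3, h4, h5, h6, h7, h8⟩
  let v : V → Ed V := fun x => φ (false, i, m, 0, x, x)
  let f : V → V := fun x => (v x).2.2.2.2.1
  have hdiag : ∀ x, LRel i m 0 x x := fun x => rfl
  have hvt : ∀ x, (v x).2.2.2.2.2 = f x := by
    intro x
    have h1 := hφ _ (hA false 0 x x (hdiag x))
    simp only [Valid, mem_ofPred_eq] at h1
    rw [hlab false 0 x x (hdiag x)] at h1
    exact h1.symm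
  have hedge : ∀ b l x y, LRel i m l x y →
      (φ (b, i, m, l, x, y)).2.1 = (v x).2.1 ∧ (φ (b, i, m, l, x, y)).2.2.1 = (v x).2.2.1 ∧
      (v y).2.1 = (v x).2.1 ∧ (v y).2.2.1 = (v x).2.2.1 ∧
      LRel (v x).2.1 (v x).2.2.1 l (f x) (f y) := by
    intro b l x y h
    have h0 := hpres 0 _ (hA b l x y h) _ (hA false 0 x x (hdiag x)) rfl
    have h1 := hpres 1 _ (hA b l x y h) _ (hA false 0 y y (hdiag y)) rfl
    have h2 := hφ _ (hA b l x y h)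
    have h3 := hlab b l x y h
    have h4 := hvt y
    change cl 0 _ = cl 0 (v x) at h0
    change cl 1 _ = cl 1 (v y) at h1
    simp only [Valid, mem_ofPred_eq] at h2
    simp only [f] at h4 ⊢
    generalize φ (b, i, m, l, x, y) = e at *
    generalize v x = vx at *
    generalize v y = vy at *
    obtain ⟨b0, i0, m0, l0, x0, y0⟩ := e
    obtain ⟨b1, i1, m1, l1, x1, y1⟩ := vx
    obtain ⟨b2, i2, m2, l2, x2, y2⟩ := vy
    simp only [cl, Prod.mk.injEq] at h0 h1 h2 h3 h4 ⊢
    obtain ⟨-, rfl, rfl, -, rfl, -⟩ := h0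
    obtain ⟨-, rfl, rfl, -, rfl, -⟩ := h1
    subst h3 h4
    exact ⟨rfl, rfl, rfl, rfl, h2⟩
  have hmono : StrictMono f := fun x y hxy => (hedge false 1 x y hxy).2.2.2.2
  have hconst : ∀ x y, (v y).2.1 = (v x).2.1 ∧ (v y).2.2.1 = (v x).2.2.1 := by
    intro x y
    rcases lt_trichotomy x y with h | h | h
    · have := hedge false 1 x y h
      exact ⟨this.2.2.1, this.2.2.2.1⟩
    · subst h; exact ⟨rfl, rfl⟩
    · have := hedge false 1 y x h
      exact ⟨this.2.2.1.symm, this.2.2.2.1.symm⟩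
  have hid : ∀ x, f x = x := by
    refine ladder_rigid lad IsCof (fun v hv => lad_spec hv) (fun v a ha hv => ⟨a, ha, hv⟩) f hmono ?_
    intro w hw
    have h1 : ∀ n, IsCof (f w) ∧ lad (f w) n = f (lad w n) := fun n =>
      (hedge false (n + 4) (lad w n) w ⟨hw, rfl⟩).2.2.2.2
    exact ⟨(h1 0).1, fun n => (h1 n).2⟩
  have hi : (v i).2.1 = i := by
    have h1 : f i = f i ∧ f i = (v i).2.1 := (hedge false 2 i i ⟨rfl, rfl⟩).2.2.2.2
    rw [← h1.2, hid]
  refine ⟨(v i).2.2.1, ?_, ?_⟩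
  · intro hm
    have h1 : f i = f i ∧ (v i).2.2.1 ≠ 0 := (hedge false 3 i i ⟨rfl, hm⟩).2.2.2.2
    exact h1.2
  · intro b l x y h
    have h1 := hedge b l x y h
    have h2 := hconst i x
    exact ⟨h1.1.trans (h2.1.trans hi), h1.2.1.trans h2.2⟩

end comb

theorem get_phi {E C : Type u} (c : ℕ → E → C) {K : Set (ℝ × ℝ)}
    (hz : ∀ n, zp n ∈ K)
    (H1 : ∀ C, IsClosed C → ¬ C.Countable → ∃ x ∈ C, x ∈ K ∧ x ∉ range zp)
    (H2 : ∀ x0 ∈ K, ∀ r > 0, ∀ p : ℝ × ℝ → ℝ × ℝ, ContinuousOn p (K ∩ Metric.ball x0 r) →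
      InjOn p (K ∩ Metric.ball x0 r) → MapsTo p (K ∩ Metric.ball x0 r) K →
      ∃ x ∈ K ∩ Metric.ball x0 r, p x = x)
    (k1 : ℝ × ℝ) (hk1 : k1 ∈ K) (hk1z : k1 ∉ range zp)
    (A0 A B : Set E) (hA : A ⊆ A0)
    (f : {x : Sp c K A0 | x.1 ∈ Sp c K A} → {x : Sp c K A0 | x.1 ∈ Sp c K B})
    (hf : Continuous f) (hinj : Function.Injective f) :
    ∃ φ : E → E, (∀ e ∈ A, φ e ∈ B) ∧
      (∀ e ∈ A, ∀ k ∈ K, ∀ s, s.1.1 = Phi c k e → (f s).1.1 = Phi c k (φ e)) ∧ InjOn φ A ∧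
      (∀ n, ∀ e ∈ A, ∀ e' ∈ A, c n e = c n e' → c n (φ e) = c n (φ e')) := by
  have key : ∀ e, ∃ e', e ∈ A → e' ∈ B ∧
      ∀ k ∈ K, ∀ s, s.1.1 = Phi c k e → (f s).1.1 = Phi c k e' := by
    intro e
    by_cases he : e ∈ A
    swap
    · exact ⟨e, fun h => absurd h he⟩
    let j : K → {x : Sp c K A0 | x.1 ∈ Sp c K A} := fun k =>
      ⟨⟨Phi c k.1 e, k.1, k.2, e, hA he, rfl⟩, k.1, k.2, e, he, rfl⟩
    have hj : Continuous j := by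
      refine Continuous.subtype_mk (Continuous.subtype_mk ?_ _) _
      exact (Phi_cont c e).comp continuous_subtype_val
    obtain ⟨e', he', h⟩ := main_map c H1 H2 B (fun k => (f (j k)).1.1)
      (continuous_subtype_val.comp (continuous_subtype_val.comp (hf.comp hj)))
      (by
        intro k k' h
        have h1 := hinj (Subtype.ext (Subtype.ext h))
        have h2 : Phi c k.1 e = Phi c k'.1 e := congrArg (fun s => s.1.1) h1
        exact Subtype.ext (Phi_inj c h2).1)
      (fun k => (f (j k)).2)
    refine ⟨e', fun _ => ⟨he', fun k hk s hs => ?_⟩⟩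
    have : s = j ⟨k, hk⟩ := Subtype.ext (Subtype.ext hs)
    rw [this]
    exact h ⟨k, hk⟩
  choose φ hφ using key
  have mk : ∀ e ∈ A, ∀ k ∈ K, ∃ s : {x : Sp c K A0 | x.1 ∈ Sp c K A}, s.1.1 = Phi c k e :=
    fun e he k hk => ⟨⟨⟨Phi c k e, k, hk, e, hA he, rfl⟩, k, hk, e, he, rfl⟩, rfl⟩
  refine ⟨φ, fun e he => (hφ e he).1, fun e he => (hφ e he).2, ?_, ?_⟩
  · intro e he e' he' h
    obtain ⟨s, hs⟩ := mk e he k1 hk1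
    obtain ⟨s', hs'⟩ := mk e' he' k1 hk1
    have h1 := (hφ e he).2 k1 hk1 s hs
    have h2 := (hφ e' he').2 k1 hk1 s' hs'
    rw [h, ← h2] at h1
    have h3 := hinj (Subtype.ext (Subtype.ext h1))
    rw [h3, hs'] at hs
    obtain ⟨-, h4 | ⟨n, hn, -⟩⟩ := Phi_inj c hs
    · exact h4.symm
    · exact absurd ⟨n, hn.symm⟩ hk1z
  · intro n e he e' he' h
    obtain ⟨s, hs⟩ := mk e he (zp n) (hz n)
    have h1 := (hφ e he).2 _ (hz n) s hs
    have h2 := (hφ e' he').2 _ (hz n) s (hs.trans (Phi_zp c h))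
    rw [h1] at h2
    obtain ⟨-, h4 | ⟨m, hm, h4⟩⟩ := Phi_inj c h2
    · rw [h4]
    · rw [zp_inj hm]; exact h4

theorem LRel_succ {V : Type u} [LinearOrder V] {i : V} {m l : ℕ} {x y : V} (h : LRel i m l x y) :
    LRel i (m + 1) l x y := by
  match l, h with
  | 0, h => exact h
  | 1, h => exact h
  | 2, h => exact h
  | 3, h => exact ⟨h.1, Nat.succ_ne_zero m⟩
  | _ + 4, h => exact h

theorem shift_map {E C : Type u} (c : ℕ → E → C) (K : Set (ℝ × ℝ)) (A0 A B : Set E) (hB : B ⊆ A0)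
    (τ : E → E) (hτ : Function.Injective τ)
    (hc : ∀ n e e', c n (τ e) = c n (τ e') ↔ c n e = c n e') (hτA : ∀ e ∈ A, τ e ∈ B) :
    ExistsInjCont {x : Sp c K A0 | x.1 ∈ Sp c K A} {x : Sp c K A0 | x.1 ∈ Sp c K B} := by
  have h : ∀ s : {x : Sp c K A0 | x.1 ∈ Sp c K A}, ∃ k ∈ K, ∃ e ∈ A, s.1.1 = Phi c k e := fun s => s.2
  choose k hk e he hs using h
  refine ⟨fun s => ⟨⟨Phi c (k s) (τ (e s)), k s, hk s, _, hB (hτA _ (he s)), rfl⟩,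
    k s, hk s, _, hτA _ (he s), rfl⟩, ?_, ?_⟩
  · refine LipschitzWith.continuous (K := 1) (LipschitzWith.of_dist_le_mul fun s s' => ?_)
    rw [NNReal.coe_one, one_mul]
    change dist (Phi c (k s) (τ (e s))) (Phi c (k s') (τ (e s'))) ≤ dist s.1.1 s'.1.1
    rw [hs s, hs s']
    exact Phi_tau c τ hτ hc _ _ _ _
  · intro s s' h
    have h1 : Phi c (k s) (τ (e s)) = Phi c (k s') (τ (e s')) := congrArg (fun s => s.1.1) h
    refine Subtype.ext (Subtype.ext ?_)
    rw [hs s, hs s']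
    obtain ⟨h2, h3 | ⟨n, hn, h3⟩⟩ := Phi_inj c h1
    · rw [h2, hτ h3]
    · rw [← h2, hn]
      exact Phi_zp c ((hc _ _ _).1 h3)

end helpers

theorem statement6 (α : Cardinal.{u}) (hα : Cardinal.continuum ≤ α) :
    ∃ (X : Type u) (tX : TopologicalSpace X),
      @TopologicalSpace.MetrizableSpace X tX ∧ #X = α ∧
      @RepresentsByInjCont α X tX := by
  obtain ⟨K, hz, H1, H2⟩ := exists_K
  obtain ⟨k1, -, hk1, hk1z⟩ := H1 Set.univ isClosed_univ (by
    rw [Set.countable_univ_iff]; exact not_countable)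
  obtain ⟨lo, hwf⟩ := exists_wellFoundedLT α.out
  have hα0 : ℵ₀ ≤ α := Cardinal.aleph0_le_continuum.trans hα
  have hV : #(WithTop α.out) = α := by
    have : #(WithTop α.out) = #α.out + 1 := Cardinal.mk_option
    rw [this, Cardinal.mk_out, Cardinal.add_one_eq hα0]
  generalize hVdef : WithTop α.out = V at hV
  have hlo : ∃ (lo : LinearOrder V) (_ : WellFoundedLT V), Nonempty (OrderTop V) := by
    subst hVdef
    exact ⟨inferInstance, inferInstance, ⟨inferInstance⟩⟩
  obtain ⟨_, _, ⟨_⟩⟩ := hlo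
  let c : ℕ → Ed V → Ed V := cl
  have hdiag : ∀ (b : Bool) (i : V) (m : ℕ) (x : V), (b, i, m, 0, x, x) ∈ Valid (V := V) :=
    fun b i m x => (rfl : x = x)
  refine ⟨Sp c K (Valid (V := V)), inferInstance, inferInstance, ?_, ?_⟩
  · apply le_antisymm
    · have h : ∀ s : Sp c K (Valid (V := V)), ∃ k ∈ K, ∃ e ∈ Valid (V := V), s.1 = Phi c k e := fun s => s.2
      choose k hk e he hs using h
      have h1 : #(Sp c K (Valid (V := V))) ≤ #(Ed V × ULift.{u} (ℝ × ℝ)) :=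
        Cardinal.mk_le_of_injective (f := fun s => (e s, ULift.up (k s))) (by
          intro s s' h
          simp only [Prod.mk.injEq, ULift.up.injEq] at h
          refine Subtype.ext ?_
          rw [hs s, hs s', h.1, h.2])
      refine h1.trans ?_
      simp only [Ed, Cardinal.mk_prod, Cardinal.lift_id, Cardinal.mk_uLift, hV, Cardinal.mk_real,
        Cardinal.lift_mul, Cardinal.lift_lift, Cardinal.lift_continuum, Cardinal.lift_uzero,
        Cardinal.mk_nat, Cardinal.lift_aleph0, Cardinal.mk_bool, Cardinal.lift_ofNat]
      have h2 : (2 : Cardinal.{u}) ≤ α := (Cardinal.nat_lt_aleph0 2).le.trans hα0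
      repeat' first
        | exact hα0 | exact hα | exact h2 | exact le_rfl | apply Cardinal.mul_le_of_le hα0
    · rw [← hV]
      refine Cardinal.mk_le_of_injective (f := fun i : V =>
        (⟨Phi c k1 (false, i, 0, 0, i, i), k1, hk1, _, hdiag _ _ _ _, rfl⟩ : Sp c K (Valid (V := V)))) ?_
      intro i j h
      have h1 : Phi c k1 (false, i, 0, 0, i, i) = Phi c k1 (false, j, 0, 0, j, j) := congrArg Subtype.val h
      obtain ⟨-, h4 | ⟨n, hn, -⟩⟩ := Phi_inj c h1
      · exact congrArg (fun e => e.2.1) h4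
      · exact absurd ⟨n, hn.symm⟩ hk1z
  · intro Q le hQ hrefl htrans
    obtain ⟨ι⟩ : Nonempty (Q ↪ V) := by
      rw [← Cardinal.le_def, hV]; exact hQ
    let A : Q → Set (Ed V) := fun q =>
      {e | e ∈ Valid (V := V) ∧ (∃ p, le p q ∧ e.2.1 = ι p) ∧ (e.2.2.1 = 0 → e.2.1 = ι q)}
    have hAV : ∀ q, A q ⊆ Valid (V := V) := fun q e he => he.1
    have hcomp : ∀ q p m, le p q → (m = 0 → p = q) → ∀ b l x y, LRel (ι p) m l x y →
        (b, ι p, m, l, x, y) ∈ A q := by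
      intro q p m hp hm b l x y h
      exact ⟨h, ⟨p, hp, rfl⟩, fun h0 => congrArg ι (hm h0)⟩
    refine ⟨fun q => {x | x.1 ∈ Sp c K (A q)}, ?_, ?_, ?_⟩
    · intro q
      refine Sp_clopen c K _ _ ?_
      intro n e he e' he' h
      have h1 := cl_idx n e
      have h2 := cl_idx n e'
      change cl n e = cl n e' at h
      rw [h] at h1
      have h3 := h1.1.symm.trans h2.1
      have h4 := h1.2.symm.trans h2.2
      refine ⟨he', ?_, ?_⟩
      · rw [← h3]; exact he.2.1
      · rw [← h3, ← h4]; exact he.2.2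
    · intro q q' hne
      refine ⟨fun h => ?_⟩
      obtain ⟨φ, a1, a2, a3, a4⟩ := get_phi c hz H1 H2 k1 hk1 hk1z _ _ _ (hAV q) h h.continuous h.injective
      obtain ⟨ψ, b1, b2, b3, b4⟩ := get_phi c hz H1 H2 k1 hk1 hk1z _ _ _ (hAV q') h.symm
        h.symm.continuous h.symm.injective
      have hinv : ∀ e ∈ A q, ψ (φ e) = e := by
        intro e he
        let s : {x : Sp c K (Valid (V := V)) | x.1 ∈ Sp c K (A q)} :=
          ⟨⟨Phi c k1 e, k1, hk1, e, hAV q he, rfl⟩, k1, hk1, e, he, rfl⟩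
        have h1 := a2 e he k1 hk1 s rfl
        have h2 := b2 _ (a1 e he) k1 hk1 (h s) h1
        rw [h.symm_apply_apply] at h2
        obtain ⟨-, h4 | ⟨n, hn, -⟩⟩ := Phi_inj c (show Phi c k1 e = _ from h2)
        · exact h4.symm
        · exact absurd ⟨n, hn.symm⟩ hk1z
      obtain ⟨m', -, hm'⟩ := comb_main (A q) φ (fun e he => hAV q' (a1 e he)) a3 a4 (ι q) 0
        (hcomp q q 0 (hrefl q) (fun _ => rfl))
      have he0 : (false, ι q, 0, 0, ι q, ι q) ∈ A q :=
        hcomp q q 0 (hrefl q) (fun _ => rfl) false 0 (ι q) (ι q) rfl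
      obtain ⟨g1, g2⟩ := hm' false 0 (ι q) (ι q) rfl
      have g3 := a1 _ he0
      have g4 := hinv _ he0
      generalize φ (false, ι q, 0, 0, ι q, ι q) = e at *
      obtain ⟨b, i, m, l, x, y⟩ := e
      simp only at g1 g2
      subst g1 g2
      obtain ⟨g5, ⟨p, hp, hip⟩, g6⟩ := g3
      simp only at hip g6
      have hqp : q = p := ι.injective hip
      subst hqp
      have hm0 : m ≠ 0 := fun h0 => hne (ι.injective (g6 h0))
      obtain ⟨m'', hm1, hm2⟩ := comb_main (A q') ψ (fun e he => hAV q (b1 e he)) b3 b4 (ι q) m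
        (hcomp q' q m hp (fun h0 => absurd h0 hm0))
      have := (hm2 b l x y g5).2
      rw [g4] at this
      exact hm1 hm0 this.symm
    · intro q q'
      constructor
      · intro hle
        refine shift_map c K _ _ _ (hAV q') sh sh_inj ?_ ?_
        · intro n e e'
          change cl n _ = cl n _ ↔ cl n _ = cl n _
          rw [cl_sh, cl_sh, sh_inj.eq_iff]
        · rintro ⟨b, i, m, l, x, y⟩ ⟨h1, ⟨p, hp, h2⟩, -⟩
          exact ⟨LRel_succ h1, ⟨p, htrans _ _ _ hp hle, h2⟩, fun h => absurd h (Nat.succ_ne_zero m)⟩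
      · rintro ⟨f, hf, hinj⟩
        obtain ⟨φ, a1, a2, a3, a4⟩ := get_phi c hz H1 H2 k1 hk1 hk1z _ _ _ (hAV q) f hf hinj
        obtain ⟨m', -, hm'⟩ := comb_main (A q) φ (fun e he => hAV q' (a1 e he)) a3 a4 (ι q) 0
          (hcomp q q 0 (hrefl q) (fun _ => rfl))
        have he0 : (false, ι q, 0, 0, ι q, ι q) ∈ A q :=
          hcomp q q 0 (hrefl q) (fun _ => rfl) false 0 (ι q) (ι q) rfl
        obtain ⟨g1, g2⟩ := hm' false 0 (ι q) (ι q) rfl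
        obtain ⟨-, ⟨p, hp, hip⟩, -⟩ := a1 _ he0
        rw [g1] at hip
        rw [ι.injective hip]
        exact hp
end
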